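/- arXiv:1804.07673 — 8 statements merged into one kernel-verified Lean document; each statement's English description precedes it below -/
import Mathlib

section
/- For every n, the balanced, complete, bipartite 3-uniform hypergraph B_n does not contain the Fano plane: if X and Y partition an n-element vertex set and E is the set of all 3-element subsets intersecting both X and Y, then the hypergraph (X ∪ Y, E) contains no Fano plane. -/
/-- A `3`-uniform hypergraph (given by its edge set `E`) contains the Fano plane if
there are seven distinct vertices `v 0, …, v 6` such that the seven triples below
(the lines of the projective plane over `GF(2)`) are all edges. -/
def ContainsFano {α : Type*} [DecidableEq α] (E : Finset (Finset α)) : Prop :=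
  ∃ v : Fin 7 → α, Function.Injective v ∧
    ({v 0, v 1, v 2} : Finset α) ∈ E ∧ ({v 2, v 3, v 4} : Finset α) ∈ E ∧
    ({v 0, v 4, v 5} : Finset α) ∈ E ∧ ({v 0, v 3, v 6} : Finset α) ∈ E ∧
    ({v 2, v 5, v 6} : Finset α) ∈ E ∧ ({v 1, v 4, v 6} : Finset α) ∈ E ∧
    ({v 1, v 3, v 5} : Finset α) ∈ E

/-- `b n = C(n,3) − C(⌊n/2⌋,3) − C(⌈n/2⌉,3)`, the number of edges of the balanced,
complete, bipartite `3`-uniform hypergraph on `n` vertices. -/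
def b (n : ℕ) : ℕ := n.choose 3 - (n / 2).choose 3 - ((n + 1) / 2).choose 3

/-!
A complete bipartite hypergraph is coloured by its two parts without monochromatic edges, so it
suffices that every 2-colouring of the Fano plane has a monochromatic line. This holds in every
Steiner triple system on `v > 4` points. Encode a 2-colouring by signs `ε p = ±1`. A triple carrying
both colours has sign sum `±1`, so its ordered pairs of distinct points contribute `1 - 3 = -2` to
`∑ ε p * ε q`. Every such pair of points lies in a unique block, and there are `v * (v - 1) / 6`
blocks; if none is monochromatic, then `(∑ ε p) ^ 2 = v - v * (v - 1) / 3 = v * (4 - v) / 3 < 0`.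
-/

open Finset

/-- A Steiner triple system on the points of `P`, given by its set `B` of blocks: triples such that
any two distinct points lie in exactly one of them. The Fano plane is the one on seven points. -/
structure IsSteinerTripleSystem {P : Type*} (B : Finset (Finset P)) : Prop where
  card_block : ∀ b ∈ B, #b = 3
  existsUnique_block : ∀ p q, p ≠ q → ∃! b, b ∈ B ∧ p ∈ b ∧ q ∈ b

theorem sum_offDiag_mul {ι R : Type*} [CommRing R] (s : Finset ι) (f : ι → R) :
    ∑ x ∈ s.offDiag, f x.1 * f x.2 = (∑ i ∈ s, f i) ^ 2 - ∑ i ∈ s, f i ^ 2 := by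
  classical
  rw [eq_sub_iff_add_eq', sq, sum_mul_sum, ← sum_product', ← diag_union_offDiag,
    sum_union (disjoint_diag_offDiag s), sum_diag]
  simp only [sq]

theorem sq_sum_sign_of_card_eq_three {P : Type*} [DecidableEq P] {b S : Finset P} (hb : #b = 3)
    (hsub : ¬b ⊆ S) (hdisj : ¬Disjoint b S) :
    (∑ p ∈ b, if p ∈ S then (1 : ℤ) else -1) ^ 2 = 1 := by
  have hin : 0 < #(b ∩ S) := card_pos.2 (not_disjoint_iff_nonempty_inter.1 hdisj)
  have hout : 0 < #(b \ S) := card_pos.2 (sdiff_nonempty.2 hsub)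
  have hadd : #(b ∩ S) + #(b \ S) = 3 := (card_inter_add_card_sdiff b S).trans hb
  rw [sum_ite, sum_const, sum_const, filter_mem_eq_inter, filter_notMem_eq_sdiff]
  obtain ⟨h₁, h₂⟩ | ⟨h₁, h₂⟩ : #(b ∩ S) = 1 ∧ #(b \ S) = 2 ∨ #(b ∩ S) = 2 ∧ #(b \ S) = 1 := by
    omega
  all_goals norm_num [h₁, h₂]

namespace IsSteinerTripleSystem

variable {P : Type*} {B : Finset (Finset P)}

theorem pairwiseDisjoint_offDiag (hB : IsSteinerTripleSystem B) :
    (B : Set (Finset P)).PairwiseDisjoint offDiag := by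
  intro b hb c hc hbc
  refine disjoint_left.2 fun x hxb hxc => hbc ?_
  rw [mem_offDiag] at hxb hxc
  exact (hB.existsUnique_block x.1 x.2 hxb.2.2).unique ⟨hb, hxb.1, hxb.2.1⟩ ⟨hc, hxc.1, hxc.2.1⟩

variable [Fintype P]

theorem biUnion_offDiag [DecidableEq P] (hB : IsSteinerTripleSystem B) :
    B.biUnion offDiag = univ.offDiag := by
  ext x
  simp only [mem_biUnion, mem_offDiag, mem_univ, true_and]
  constructor
  · rintro ⟨b, -, -, -, hne⟩
    exact hne
  · intro hne
    obtain ⟨b, ⟨hb, h₁, h₂⟩, -⟩ := hB.existsUnique_block x.1 x.2 hne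
    exact ⟨b, hb, h₁, h₂, hne⟩

theorem sum_blocks_sum_offDiag (hB : IsSteinerTripleSystem B) {M : Type*} [AddCommMonoid M]
    (f : P × P → M) : ∑ b ∈ B, ∑ x ∈ b.offDiag, f x = ∑ x ∈ univ.offDiag, f x := by
  classical
  rw [← hB.biUnion_offDiag, sum_biUnion hB.pairwiseDisjoint_offDiag]

theorem six_mul_card_blocks (hB : IsSteinerTripleSystem B) :
    6 * #B = Fintype.card P * (Fintype.card P - 1) := by
  calc 6 * #B = ∑ b ∈ B, #b.offDiag := by
        rw [sum_const_nat fun b hb => ?_, mul_comm]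
        rw [offDiag_card, hB.card_block b hb]
    _ = #(univ : Finset P).offDiag := by
        simpa only [card_eq_sum_ones] using hB.sum_blocks_sum_offDiag fun _ => 1
    _ = Fintype.card P * (Fintype.card P - 1) := by
        rw [offDiag_card, card_univ, Nat.mul_sub_one]

theorem exists_monochromatic (hB : IsSteinerTripleSystem B) (hP : 4 < Fintype.card P)
    (S : Finset P) : ∃ b ∈ B, b ⊆ S ∨ Disjoint b S := by
  classical
  by_contra! hbi
  let ε : P → ℤ := fun p => if p ∈ S then 1 else -1
  have sq_sign (p : P) : ε p ^ 2 = 1 := by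
    by_cases hp : p ∈ S <;> simp [ε, hp]
  have sum_block (b : Finset P) (hb : b ∈ B) : ∑ x ∈ b.offDiag, ε x.1 * ε x.2 = -2 := by
    have hsum : (∑ p ∈ b, ε p) ^ 2 = 1 :=
      sq_sum_sign_of_card_eq_three (hB.card_block b hb) (hbi b hb).1 (hbi b hb).2
    simp [sum_offDiag_mul, hsum, sq_sign, hB.card_block b hb]
  have sq_sum : (∑ p, ε p) ^ 2 = Fintype.card P - 2 * #B := by
    have hpairs := hB.sum_blocks_sum_offDiag fun x => ε x.1 * ε x.2
    rw [sum_congr rfl sum_block, sum_offDiag_mul] at hpairs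
    simp only [sq_sign, sum_const, card_univ, nsmul_eq_mul, mul_one] at hpairs
    linarith
  have card_lt : Fintype.card P < 2 * #B := by
    have hblocks := hB.six_mul_card_blocks
    have hmul : Fintype.card P * 4 ≤ Fintype.card P * (Fintype.card P - 1) := by gcongr; omega
    omega
  have hnonneg := sq_nonneg (∑ p, ε p)
  omega

end IsSteinerTripleSystem

/-- The lines of the Fano plane on the points `0, …, 6`, labelled as in `ContainsFano`. -/
def fanoLines : Finset (Finset (Fin 7)) :=
  {{0, 1, 2}, {2, 3, 4}, {0, 4, 5}, {0, 3, 6}, {2, 5, 6}, {1, 4, 6}, {1, 3, 5}}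

theorem isSteinerTripleSystem_fanoLines : IsSteinerTripleSystem fanoLines where
  card_block := by simp [fanoLines]
  existsUnique_block := by
    have card_lines : ∀ p q, p ≠ q → #{l ∈ fanoLines | p ∈ l ∧ q ∈ l} = 1 := by decide
    simpa only [card_eq_one, singleton_iff_unique_mem, mem_filter] using card_lines

theorem ContainsFano.exists_image_mem {α : Type*} [DecidableEq α] {E : Finset (Finset α)}
    (h : ContainsFano E) : ∃ v : Fin 7 → α, ∀ l ∈ fanoLines, l.image v ∈ E := by
  obtain ⟨v, -, hv⟩ := h
  exact ⟨v, by simpa [fanoLines, image_insert] using hv⟩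

theorem ContainsFano.exists_monochromatic {α : Type*} [DecidableEq α] {E : Finset (Finset α)}
    (h : ContainsFano E) (S : Finset α) : ∃ e ∈ E, e ⊆ S ∨ Disjoint e S := by
  obtain ⟨v, hv⟩ := h.exists_image_mem
  obtain ⟨l, hl, hmono⟩ := isSteinerTripleSystem_fanoLines.exists_monochromatic
    (by decide) {i | v i ∈ S}
  refine ⟨l.image v, hv l hl, hmono.imp (fun hsub => ?_) fun hdisj => ?_⟩
  · exact image_subset_iff.2 fun i hi => (mem_filter_univ i).1 (hsub hi)
  · simpa [disjoint_left] using hdisj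

/-- The complete bipartite `3`-uniform hypergraph with parts `X` and `Y` contains
no Fano plane. -/
theorem bipartite_fano_free {α : Type*} [DecidableEq α] (n : ℕ) (X Y : Finset α)
    (hdisj : Disjoint X Y) (hcard : (X ∪ Y).card = n) :
    ¬ ContainsFano (((X ∪ Y).powersetCard 3).filter
      (fun e => (e ∩ X).Nonempty ∧ (e ∩ Y).Nonempty)) := by
  intro hfano
  obtain ⟨e, he, hsub | hdisjX⟩ := hfano.exists_monochromatic X
  all_goals obtain ⟨-, heX, heY⟩ := mem_filter.1 he
  · exact not_disjoint_iff_nonempty_inter.2 heY (hdisj.mono_left hsub)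
  · exact not_disjoint_iff_nonempty_inter.2 heX hdisjX
end

section
/- The hypergraph J_7, obtained from the complete 3-uniform hypergraph on 7 vertices by deleting all five triples that contain a fixed pair of vertices, has exactly 30 edges and does not contain the Fano plane. -/
/-!
Any two points of the Fano plane lie on a common line. A copy of the Fano plane inside a vertex set
of size seven uses every vertex, so there every pair of vertices is covered by an edge; in `J_7` the
pair `{x, y}` is not. For the count, `C(5, 1) = 5` of the `C(7, 3) = 35` triples contain both `x`
and `y`.
-/

open Finset

theorem exists_fanoLine_mem_mem (i j : Fin 7) : ∃ L ∈ fanoLines, i ∈ L ∧ j ∈ L := by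
  revert i j
  decide

section

variable {α : Type*} [DecidableEq α]

theorem containsFano_iff_exists_image_mem {E : Finset (Finset α)} :
    ContainsFano E ↔
      ∃ v : Fin 7 → α, Function.Injective v ∧ ∀ L ∈ fanoLines, L.image v ∈ E := by
  simp [ContainsFano, fanoLines, image_insert]

theorem ContainsFano.exists_edge_mem_mem {E : Finset (Finset α)} {V : Finset α}
    (h : ContainsFano E) (hE : E ⊆ V.powerset) (hV : #V ≤ 7) {x y : α} (hx : x ∈ V)
    (hy : y ∈ V) : ∃ e ∈ E, x ∈ e ∧ y ∈ e := by
  obtain ⟨v, hv, hlines⟩ := containsFano_iff_exists_image_mem.1 h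
  have himage_subset : univ.image v ⊆ V := image_subset_iff.2 fun i _ ↦ by
    obtain ⟨L, hL, hi, -⟩ := exists_fanoLine_mem_mem i i
    exact mem_powerset.1 (hE (hlines L hL)) (mem_image_of_mem v hi)
  have himage : univ.image v = V :=
    eq_of_subset_of_card_le himage_subset (by simpa [card_image_of_injective _ hv] using hV)
  obtain ⟨i, -, rfl⟩ := mem_image.1 (himage ▸ hx)
  obtain ⟨j, -, rfl⟩ := mem_image.1 (himage ▸ hy)
  obtain ⟨L, hL, hi, hj⟩ := exists_fanoLine_mem_mem i j
  exact ⟨L.image v, hlines L hL, mem_image_of_mem v hi, mem_image_of_mem v hj⟩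

theorem card_filter_powersetCard_not_subset {s t : Finset α} {n : ℕ} (hst : s ⊆ t)
    (hsn : #s ≤ n) :
    #{e ∈ t.powersetCard n | ¬ s ⊆ e} = (#t).choose n - (#t - #s).choose (n - #s) := by
  rw [filter_not, card_sdiff_of_subset (filter_subset _ _), card_powersetCard,
    card_filter_powersetCard_subset s t n hst hsn]

theorem card_filter_powersetCard_not_mem_and_mem {V : Finset α} {x y : α} {n : ℕ}
    (hx : x ∈ V) (hy : y ∈ V) (hxy : x ≠ y) (hn : 2 ≤ n) :
    #{e ∈ V.powersetCard n | ¬ (x ∈ e ∧ y ∈ e)} =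
      (#V).choose n - (#V - 2).choose (n - 2) := by
  have hpair : #{x, y} = 2 := card_pair hxy
  have hcard := card_filter_powersetCard_not_subset (s := {x, y}) (t := V)
    (insert_subset hx (singleton_subset_iff.2 hy)) (hpair.trans_le hn)
  simpa only [insert_subset_iff, singleton_subset_iff, hpair] using hcard

theorem J7_fano_free_general {V : Finset α} (hV : #V = 7) {x y : α} (hx : x ∈ V) (hy : y ∈ V)
    (hxy : x ≠ y) :
    #{e ∈ V.powersetCard 3 | ¬ (x ∈ e ∧ y ∈ e)} = 30 ∧
      ¬ ContainsFano {e ∈ V.powersetCard 3 | ¬ (x ∈ e ∧ y ∈ e)} := by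
  constructor
  · rw [card_filter_powersetCard_not_mem_and_mem hx hy hxy (by decide), hV]
    decide
  · intro hFano
    have hE : {e ∈ V.powersetCard 3 | ¬ (x ∈ e ∧ y ∈ e)} ⊆ V.powerset := fun e he ↦
      mem_powerset.2 (mem_powersetCard.1 (mem_filter.1 he).1).1
    obtain ⟨e, he, hxye⟩ := hFano.exists_edge_mem_mem hE hV.le hx hy
    exact (mem_filter.1 he).2 hxye

end

/-- The hypergraph `J_7`, obtained from the complete `3`-uniform hypergraph on `7`
vertices by deleting the five triples containing the fixed pair `{x, y}`, has `30`
edges and contains no Fano plane. -/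
theorem J7_fano_free (x y : Fin 7) (hxy : x ≠ y) :
    (((Finset.univ : Finset (Fin 7)).powersetCard 3).filter
        (fun e => ¬ (x ∈ e ∧ y ∈ e))).card = 30 ∧
    ¬ ContainsFano (((Finset.univ : Finset (Fin 7)).powersetCard 3).filter
        (fun e => ¬ (x ∈ e ∧ y ∈ e))) :=
  J7_fano_free_general (card_fin 7) (mem_univ x) (mem_univ y) hxy
end

section
/- For every integer n ≥ 4, every 3-uniform hypergraph on n vertices with at least b(n) edges contains a tetrahedron, i.e., four distinct vertices all four of whose 3-element subsets are edges. -/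
open Finset
open scoped FinsetFamily

section BipartiteCount

theorem add_choose_three (p q : ℕ) :
    (p + q).choose 3 = p.choose 3 + q.choose 3 + p * q.choose 2 + p.choose 2 * q := by
  rw [Nat.add_choose_eq,
    Nat.sum_antidiagonal_eq_sum_range_succ fun i j ↦ p.choose i * q.choose j]
  simp only [sum_range_succ, sum_range_zero, Nat.choose_zero_right, Nat.choose_one_right,
    Nat.reduceSub]
  ring

theorem cast_choose_three (n : ℕ) : (n.choose 3 : ℚ) = n * (n - 1) * (n - 2) / 6 := by
  simp [Nat.cast_choose_eq_descPochhammer_div, descPochhammer_succ_right, Nat.factorial]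

theorem cast_b (n : ℕ) : (b n : ℚ) = (n / 2 : ℕ) * ((n + 1) / 2 : ℕ) * (n - 2) / 2 := by
  have hparts : n / 2 + (n + 1) / 2 = n := by omega
  have hcrossing : b n = n / 2 * ((n + 1) / 2).choose 2 + (n / 2).choose 2 * ((n + 1) / 2) := by
    have hsplit := add_choose_three (n / 2) ((n + 1) / 2)
    rw [hparts] at hsplit
    unfold b
    omega
  have hcast : (n : ℚ) = (n / 2 : ℕ) + ((n + 1) / 2 : ℕ) := mod_cast hparts.symm
  rw [hcrossing, hcast]
  push_cast [Nat.cast_choose_two]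
  ring

theorem sq_le_four_mul_half_mul_half_add_one (n : ℕ) :
    n ^ 2 ≤ 4 * (n / 2 * ((n + 1) / 2)) + 1 := by
  obtain ⟨k, rfl | rfl⟩ := n.even_or_odd'
  · rw [show 2 * k / 2 = k by omega, show (2 * k + 1) / 2 = k by omega]
    linarith
  · rw [show (2 * k + 1) / 2 = k by omega, show (2 * k + 1 + 1) / 2 = k + 1 by omega]
    linarith

theorem three_mul_choose_three_lt_four_mul_b {n : ℕ} (hn : 3 ≤ n) :
    3 * n.choose 3 < 4 * b n := by
  have hn_cast : (3 : ℚ) ≤ n := mod_cast hn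
  have hsq : (n : ℚ) ^ 2 ≤ 4 * ((n / 2 : ℕ) * ((n + 1) / 2 : ℕ)) + 1 :=
    mod_cast sq_le_four_mul_half_mul_half_add_one n
  have hparts : (n * (n - 1) : ℚ) < 4 * ((n / 2 : ℕ) * ((n + 1) / 2 : ℕ)) := by linarith
  suffices (3 * n.choose 3 : ℚ) < 4 * b n from mod_cast this
  calc (3 * n.choose 3 : ℚ)
      = n * (n - 1) * ((n - 2) / 2) := by rw [cast_choose_three]; ring
    _ < 4 * ((n / 2 : ℕ) * ((n + 1) / 2 : ℕ)) * ((n - 2) / 2) := by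
        gcongr
        linarith
    _ = 4 * b n := by rw [cast_b]; ring

end BipartiteCount

section Averaging

variable {α : Type*} [Fintype α] {r : ℕ} {𝒜 : Finset (Finset α)}

theorem card_upShadow_le_card_mul [DecidableEq α] (h𝒜 : (𝒜 : Set (Finset α)).Sized r) :
    #(∂⁺ 𝒜) ≤ #𝒜 * (Fintype.card α - r) := by
  rw [upShadow, sup_eq_biUnion]
  refine card_biUnion_le_card_mul _ _ _ fun s hs ↦ card_image_le.trans ?_
  rw [card_compl, h𝒜 hs]

theorem choose_le_card_mul_of_powersetCard_subset_upShadow [DecidableEq α]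
    (h𝒜 : (𝒜 : Set (Finset α)).Sized r) (hr : r < Fintype.card α)
    (hcover : powersetCard (r + 1) univ ⊆ ∂⁺ 𝒜) :
    (Fintype.card α).choose r ≤ #𝒜 * (r + 1) := by
  refine Nat.le_of_mul_le_mul_right ?_ (Nat.sub_pos_of_lt hr)
  calc (Fintype.card α).choose r * (Fintype.card α - r)
      = #(powersetCard (r + 1) (univ : Finset α)) * (r + 1) := by
        rw [card_powersetCard, card_univ, Nat.choose_succ_right_eq]
    _ ≤ #𝒜 * (Fintype.card α - r) * (r + 1) := by
        gcongr
        exact (card_le_card hcover).trans (card_upShadow_le_card_mul h𝒜)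
    _ = #𝒜 * (r + 1) * (Fintype.card α - r) := by ring

theorem exists_powersetCard_subset_of_mul_choose_lt
    (h𝒜 : (𝒜 : Set (Finset α)).Sized r) (hr : r < Fintype.card α)
    (hdense : r * (Fintype.card α).choose r < (r + 1) * #𝒜) :
    ∃ F : Finset α, #F = r + 1 ∧ F.powersetCard r ⊆ 𝒜 := by
  classical
  set missing : Finset (Finset α) := powersetCard r univ \ 𝒜 with hmissing
  have hcard : #missing + #𝒜 = (Fintype.card α).choose r := by
    rw [card_sdiff_add_card_eq_card h𝒜.subset_powersetCard_univ, card_powersetCard, card_univ]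
  have hfew : #missing * (r + 1) < (Fintype.card α).choose r := by
    rw [← hcard] at hdense ⊢
    linarith
  have hsized : (missing : Set (Finset α)).Sized r :=
    (Set.sized_powersetCard univ r).mono (coe_subset.2 sdiff_subset)
  obtain ⟨F, hF, hFmissing⟩ := not_subset.1 fun hcover ↦
    hfew.not_ge (choose_le_card_mul_of_powersetCard_subset_upShadow hsized hr hcover)
  have hFcard : #F = r + 1 := (mem_powersetCard.1 hF).2
  refine ⟨F, hFcard, fun e he ↦ ?_⟩
  obtain ⟨heF, hecard⟩ := mem_powersetCard.1 he
  by_contra he𝒜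
  refine hFmissing (mem_upShadow_iff_exists_mem_card_add_one.2 ⟨e, ?_, heF, by omega⟩)
  simp [hmissing, hecard, he𝒜]

end Averaging

section Tetrahedron

variable {α : Type*} [DecidableEq α] {E : Finset (Finset α)}

/-- A `3`-uniform hypergraph (given by its edge set `E`) contains the tetrahedron `K₄⁽³⁾` if there
are four distinct vertices all of whose triples are edges. -/
def ContainsTetrahedron (E : Finset (Finset α)) : Prop :=
  ∃ w x y z : α, w ≠ x ∧ w ≠ y ∧ w ≠ z ∧ x ≠ y ∧ x ≠ z ∧ y ≠ z ∧
    ({w, x, y} : Finset α) ∈ E ∧ ({w, x, z} : Finset α) ∈ E ∧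
    ({w, y, z} : Finset α) ∈ E ∧ ({x, y, z} : Finset α) ∈ E

theorem containsTetrahedron_of_powersetCard_subset {F : Finset α} (hF : #F = 4)
    (hFE : F.powersetCard 3 ⊆ E) : ContainsTetrahedron E := by
  obtain ⟨w, G, hw, rfl, hG⟩ := card_eq_succ.1 hF
  obtain ⟨x, y, z, hxy, hxz, hyz, rfl⟩ := card_eq_three.1 hG
  obtain ⟨hwx, hwy, hwz⟩ : w ≠ x ∧ w ≠ y ∧ w ≠ z := by simpa using hw
  refine ⟨w, x, y, z, hwx, hwy, hwz, hxy, hxz, hyz, ?_, ?_, ?_, ?_⟩ <;>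
    exact hFE (by simp [mem_powersetCard, insert_subset_iff, *])

theorem tetrahedron_of_b_edges_general [Fintype α] (hα : 4 ≤ Fintype.card α)
    (hE : (E : Set (Finset α)).Sized 3) (hdense : 3 * (Fintype.card α).choose 3 < 4 * #E) :
    ContainsTetrahedron E := by
  obtain ⟨F, hF, hFE⟩ := exists_powersetCard_subset_of_mul_choose_lt hE hα hdense
  exact containsTetrahedron_of_powersetCard_subset hF hFE

end Tetrahedron

/-- For `n ≥ 4`, every `3`-uniform hypergraph on `n` vertices with at least `b n` edges
contains a tetrahedron. -/
theorem tetrahedron_of_b_edges (n : ℕ) (hn : 4 ≤ n) (E : Finset (Finset (Fin n)))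
    (h3 : ∀ e ∈ E, e.card = 3) (hcard : b n ≤ E.card) :
    ∃ w x y z : Fin n, w ≠ x ∧ w ≠ y ∧ w ≠ z ∧ x ≠ y ∧ x ≠ z ∧ y ≠ z ∧
      ({w, x, y} : Finset (Fin n)) ∈ E ∧ ({w, x, z} : Finset (Fin n)) ∈ E ∧
      ({w, y, z} : Finset (Fin n)) ∈ E ∧ ({x, y, z} : Finset (Fin n)) ∈ E := by
  have hdense : 3 * n.choose 3 < 4 * E.card :=
    (three_mul_choose_three_lt_four_mul_b (by omega)).trans_le (by gcongr)
  exact tetrahedron_of_b_edges_general (by simpa using hn) h3 (by simpa using hdense)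
end

section
/- Let H be a 3-uniform hypergraph on 7 vertices not containing the Fano plane. If some vertex v of H lies in at least 11 edges and the induced subhypergraph of H on the remaining 6 vertices has at least 18 edges, then that induced subhypergraph on the 6 vertices other than v is isomorphic to B_6; that is, its 6-element vertex set can be partitioned into two 3-element sets X and Y such that its edges are exactly the triples meeting both X and Y. -/
/-!
A Fano plane through `v` consists of a perfect matching of the other six points, whose pairs form a
line with `v`, and of four transversals of that matching. The eight transversals of a perfect
matching split into two such quadruples (Pasch configurations), and either one completes the plane.

Among the 15 perfect matchings of the six points, at most `4 * 3 = 12` contain one of the at most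
four pairs missing from the link of `v`. For each of the remaining three, both Pasch configurations
contain one of the at most two triples missing from `H ∖ v`. So there are exactly two missing
triples, and they lie in opposite Pasch configurations of at least three perfect matchings. Triples
that intersect do so for at most two perfect matchings, so the missing triples are complementary.
-/

section PerfectMatchings

open Finset

variable {α β : Type*} [DecidableEq α] [DecidableEq β] {M : Finset (Finset α)} {A B p : Finset α}

/-- The perfect matchings of `α`, as sets of pairs. Since there are `card α / 2` pairs and they
cover `α`, they are automatically disjoint. -/
def perfectMatchings (α : Type*) [Fintype α] [DecidableEq α] : Finset (Finset (Finset α)) :=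
  {M ∈ powersetCard (Fintype.card α / 2) (powersetCard 2 univ) | M.sup id = univ}

/-- `A` is a transversal of the family `M` if it meets every member in exactly one point. -/
def IsTransversal (M : Finset (Finset α)) (A : Finset α) : Prop :=
  ∀ p ∈ M, #(A ∩ p) = 1

instance (M : Finset (Finset α)) (A : Finset α) : Decidable (IsTransversal M A) :=
  inferInstanceAs (Decidable (∀ p ∈ M, #(A ∩ p) = 1))

/-- The Pasch configuration of a transversal `A` of a perfect matching `M` of six points: the four
transversals that differ from `A` on an even number of pairs of `M`, that is, meet `A` in an odd
number of points. -/
def paschConfiguration [Fintype α] (M : Finset (Finset α)) (A : Finset α) : Finset (Finset α) :=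
  {B | IsTransversal M B ∧ Odd #(A ∩ B)}

/-- Transversals `A` and `B` of a perfect matching of six points are opposite if they lie in
different Pasch configurations of it. -/
def AreOpposite (M : Finset (Finset α)) (A B : Finset α) : Prop :=
  IsTransversal M A ∧ IsTransversal M B ∧ Even #(A ∩ B)

instance (M : Finset (Finset α)) (A B : Finset α) : Decidable (AreOpposite M A B) :=
  inferInstanceAs (Decidable (_ ∧ _ ∧ _))

lemma AreOpposite.symm (h : AreOpposite M A B) : AreOpposite M B A :=
  ⟨h.2.1, h.1, inter_comm A B ▸ h.2.2⟩

lemma AreOpposite.ne (h : AreOpposite M A B) (hA : Odd #A) : A ≠ B := by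
  rintro rfl
  exact Nat.not_even_iff_odd.2 hA (inter_self A ▸ h.2.2)

lemma mem_perfectMatchings [Fintype α] :
    M ∈ perfectMatchings α ↔
      #M = Fintype.card α / 2 ∧ (∀ p ∈ M, #p = 2) ∧ ∀ x, ∃ p ∈ M, x ∈ p := by
  simp only [perfectMatchings, mem_filter, mem_powersetCard, subset_iff, mem_univ,
    implies_true, true_and, eq_univ_iff_forall, mem_sup, id_eq]
  tauto

lemma card_inter_add_card_compl_inter [Fintype α] (A B : Finset α) :
    #(A ∩ B) + #(Aᶜ ∩ B) = #B := by
  rw [inter_comm A, inter_comm Aᶜ, ← sdiff_eq_inter_compl, card_inter_add_card_sdiff]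

lemma IsTransversal.compl [Fintype α] (hM : ∀ p ∈ M, #p = 2) (hA : IsTransversal M A) :
    IsTransversal M Aᶜ := by
  intro p hp
  have := card_inter_add_card_compl_inter A p
  have := hM p hp
  have := hA p hp
  omega

lemma exists_eq_pair_of_card_inter_eq_one (hp : #p = 2) (hA : #(A ∩ p) = 1) :
    ∃ a ∈ A, ∃ a' ∉ A, p = {a, a'} := by
  have h := card_inter_add_card_sdiff p A
  rw [inter_comm] at h
  obtain ⟨a, ha⟩ := card_eq_one.1 hA
  obtain ⟨a', ha'⟩ := card_eq_one.1 (show #(p \ A) = 1 by omega)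
  refine ⟨a, (mem_inter.1 (ha ▸ mem_singleton_self a)).1, a',
    (mem_sdiff.1 (ha' ▸ mem_singleton_self a')).2, ?_⟩
  rw [← sdiff_union_inter p A, inter_comm, ha, ha', union_comm, insert_eq]

lemma symmDiff_mem_of_isTransversal (hM : ∀ p ∈ M, #p = 2) (hcover : ∀ x, ∃ p ∈ M, x ∈ p)
    (hA : IsTransversal M A) (hB : IsTransversal M B) (hAB : #(A \ B) = 1) (hBA : #(B \ A) = 1) :
    symmDiff A B ∈ M := by
  obtain ⟨a, ha⟩ := card_eq_one.1 hAB
  obtain ⟨b, hb⟩ := card_eq_one.1 hBA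
  have ha_mem : a ∈ A ∧ a ∉ B := mem_sdiff.1 (ha ▸ mem_singleton_self a)
  obtain ⟨p, hp, hap⟩ := hcover a
  obtain ⟨c, hcB, c', hc'B, rfl⟩ := exists_eq_pair_of_card_inter_eq_one (hM p hp) (hB p hp)
  obtain rfl : a = c' := by grind
  have hcA : c ∉ A := fun hcA ↦ by
    have := hA _ hp
    rw [inter_eq_right.2 (by grind), hM _ hp] at this
    omega
  obtain rfl : c = b := mem_singleton.1 (hb ▸ mem_sdiff.2 ⟨hcB, hcA⟩)
  rwa [symmDiff_def, ha, hb, sup_eq_union, union_comm, ← insert_eq]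

lemma IsTransversal.map (h : IsTransversal M A) (w : α ↪ β) :
    IsTransversal (M.image (Finset.map w)) (A.map w) :=
  forall_mem_image.2 fun p hp ↦ by rw [← map_inter, card_map, h p hp]

lemma map_mem_paschConfiguration [Fintype α] [Fintype β] (h : B ∈ paschConfiguration M A)
    (w : α ↪ β) : B.map w ∈ paschConfiguration (M.image (Finset.map w)) (A.map w) := by
  simp only [paschConfiguration, mem_filter, mem_univ, true_and] at h ⊢
  exact ⟨h.1.map w, by rw [← map_inter, card_map]; exact h.2⟩

lemma injective_of_mem_perfectMatchings [Fintype α] (hα : Fintype.card α = 6)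
    {a a' b b' c c' : α} (hM : {{a, a'}, {b, b'}, {c, c'}} ∈ perfectMatchings α) :
    Function.Injective ![a', a, b, c, c', b'] := by
  refine ((Fintype.bijective_iff_surjective_and_card _).2 ⟨fun x ↦ ?_, by simp [hα]⟩).1
  have hx : x = a' ∨ x = a ∨ x = b ∨ x = c ∨ x = c' ∨ x = b' := by
    obtain ⟨p, hp, hxp⟩ := (mem_perfectMatchings.1 hM).2.2 x
    grind
  obtain rfl | rfl | rfl | rfl | rfl | rfl := hx
  exacts [⟨0, rfl⟩, ⟨1, rfl⟩, ⟨2, rfl⟩, ⟨3, rfl⟩, ⟨4, rfl⟩, ⟨5, rfl⟩]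

lemma exists_isTransversal [Fintype α] (hα : Fintype.card α = 6) (hM : M ∈ perfectMatchings α) :
    ∃ A, IsTransversal M A := by
  obtain ⟨hcard, hpair, -⟩ := mem_perfectMatchings.1 hM
  obtain ⟨p, q, r, -, -, -, rfl⟩ := card_eq_three.1 (hcard.trans (by rw [hα]))
  obtain ⟨a, a', -, rfl⟩ := card_eq_two.1 (hpair p (by simp))
  obtain ⟨b, b', -, rfl⟩ := card_eq_two.1 (hpair q (by simp))
  obtain ⟨c, c', -, rfl⟩ := card_eq_two.1 (hpair r (by simp))
  have hstd : IsTransversal {{1, 0}, {2, 5}, {3, 4}} ({1, 2, 3} : Finset (Fin 6)) := by decide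
  have htrans := hstd.map ⟨_, injective_of_mem_perfectMatchings hα hM⟩
  simp only [image_insert, image_singleton, map_insert, map_singleton] at htrans
  exact ⟨_, htrans⟩

/- The labels are those of `ContainsFano` shifted by one, the label `0` being kept for the seventh
point: the lines through it are spanned by the pairs below, and `{v 2, v 3, v 4}` is another
line. -/
lemma exists_embedding_of_isTransversal [Fintype α] (hα : Fintype.card α = 6)
    (hM : M ∈ perfectMatchings α) (hA : IsTransversal M A) :
    ∃ w : Fin 6 ↪ α, M = image (Finset.map w) {{1, 0}, {2, 5}, {3, 4}} ∧
      A = Finset.map w {1, 2, 3} := by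
  obtain ⟨hcard, hpair, hcover⟩ := mem_perfectMatchings.1 hM
  obtain ⟨p, q, r, -, -, -, rfl⟩ := card_eq_three.1 (hcard.trans (by rw [hα]))
  have split (s) (hs : s ∈ ({p, q, r} : Finset (Finset α))) :=
    exists_eq_pair_of_card_inter_eq_one (hpair s hs) (hA s hs)
  obtain ⟨a, ha, a', ha', rfl⟩ := split p (by simp)
  obtain ⟨b, hb, b', hb', rfl⟩ := split q (by simp)
  obtain ⟨c, hc, c', hc', rfl⟩ := split r (by simp)
  have hA_eq : A = {a, b, c} := by
    ext x
    obtain ⟨p, hp, hxp⟩ := hcover x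
    grind
  refine ⟨⟨_, injective_of_mem_perfectMatchings hα hM⟩, ?_⟩
  simp only [image_insert, image_singleton, map_insert, map_singleton]
  exact ⟨rfl, hA_eq⟩

lemma IsTransversal.card_eq_three [Fintype α] (hα : Fintype.card α = 6)
    (hM : M ∈ perfectMatchings α) (hA : IsTransversal M A) : #A = 3 := by
  obtain ⟨w, -, rfl⟩ := exists_embedding_of_isTransversal hα hM hA
  rw [card_map]
  rfl

lemma exists_mem_perfectMatchings_of_disjoint [Fintype α] (hα : Fintype.card α = 6)
    {p q : Finset α} (hp : #p = 2) (hq : #q = 2) (hpq : Disjoint p q) :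
    ∃ M ∈ perfectMatchings α, p ∈ M ∧ q ∈ M := by
  have hcompl : #(p ∪ q)ᶜ = 2 := by rw [card_compl, card_union_of_disjoint hpq, hα, hp, hq]
  have hne {s t : Finset α} (hs : #s = 2) (hst : Disjoint s t) : s ≠ t :=
    hst.ne (card_pos.1 (by omega)).ne_empty
  refine ⟨{p, q, (p ∪ q)ᶜ}, mem_perfectMatchings.2 ⟨?_, ?_, fun x ↦ ?_⟩, by simp, by simp⟩
  · rw [hα, card_eq_three]
    exact ⟨p, q, _, hne hp hpq,
      hne hp (disjoint_compl_right.mono_left subset_union_left),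
      hne hq (disjoint_compl_right.mono_left subset_union_right), rfl⟩
  · simp only [forall_mem_insert, mem_singleton, forall_eq, hp, hq, hcompl, and_self]
  · simp only [mem_insert, mem_singleton, exists_eq_or_imp, exists_eq_left, mem_compl, mem_union]
    tauto

lemma exists_areOpposite [Fintype α] (hα : Fintype.card α = 6) {T : Finset (Finset α)}
    (hM : M ∈ perfectMatchings α)
    (hpasch : ∀ A, IsTransversal M A → ∃ B ∈ T, B ∈ paschConfiguration M A) :
    ∃ A ∈ T, ∃ B ∈ T, AreOpposite M A B := by
  obtain ⟨S, hS⟩ := exists_isTransversal hα hM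
  obtain ⟨A, hA, hA_pasch⟩ := hpasch S hS
  obtain ⟨-, hA_trans, -⟩ := mem_filter.1 hA_pasch
  obtain ⟨B, hB, hB_pasch⟩ := hpasch Aᶜ (hA_trans.compl (mem_perfectMatchings.1 hM).2.1)
  obtain ⟨-, hB_trans, k, hk⟩ := mem_filter.1 hB_pasch
  have := card_inter_add_card_compl_inter A B
  have := hB_trans.card_eq_three hα hM
  exact ⟨A, hA, B, hB, hA_trans, hB_trans, 1 - k, by omega⟩

lemma areOpposite_of_mem_pair [Fintype α] (hα : Fintype.card α = 6)
    (hM : M ∈ perfectMatchings α)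
    (h : ∃ C ∈ ({A, B} : Finset _), ∃ D ∈ ({A, B} : Finset _), AreOpposite M C D) :
    AreOpposite M A B := by
  obtain ⟨C, hC, D, hD, hCD⟩ := h
  have hne : C ≠ D := hCD.ne (hCD.1.card_eq_three hα hM ▸ by decide)
  rw [mem_insert, mem_singleton] at hC hD
  obtain ⟨rfl, rfl⟩ | ⟨rfl, rfl⟩ : (C = A ∧ D = B) ∨ (C = B ∧ D = A) := by grind
  exacts [hCD, hCD.symm]

end PerfectMatchings

section SixPoints

open Finset

variable {P T : Finset (Finset (Fin 6))} {A B : Finset (Fin 6)}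

lemma card_perfectMatchings_fin_six : #(perfectMatchings (Fin 6)) = 15 := by
  decide +kernel

lemma card_perfectMatchings_mem_le (p : Finset (Fin 6)) (hp : #p = 2) :
    #{M ∈ perfectMatchings (Fin 6) | p ∈ M} ≤ 3 := by
  revert p
  decide +kernel

lemma fifteen_le_card_perfectMatchings_disjoint_add (hP : ∀ p ∈ P, #p = 2) :
    15 ≤ #{M ∈ perfectMatchings (Fin 6) | Disjoint M P} + #P * 3 := by
  have hsub : {M ∈ perfectMatchings (Fin 6) | ¬Disjoint M P} ⊆
      P.biUnion fun p ↦ {M ∈ perfectMatchings (Fin 6) | p ∈ M} := by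
    intro M
    simp only [mem_filter, not_disjoint_iff, mem_biUnion]
    tauto
  have hbad := (card_le_card hsub).trans
    (card_biUnion_le_card_mul P _ 3 fun p hp ↦ card_perfectMatchings_mem_le p (hP p hp))
  have htotal := card_filter_add_card_filter_not (s := perfectMatchings (Fin 6)) (Disjoint · P)
  rw [card_perfectMatchings_fin_six] at htotal
  omega

/- Two opposite triples that meet share two points, and every perfect matching for which they are
opposite contains the pair `A ∆ B`. Three perfect matchings contain that pair, and the one that also
contains `A ∩ B` does not have `A` as a transversal. -/
lemma card_areOpposite_le_two (hAB : (A ∩ B).Nonempty) :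
    #{M ∈ perfectMatchings (Fin 6) | AreOpposite M A B} ≤ 2 := by
  by_contra! hcard
  obtain ⟨hA, hB, heven⟩ : #A = 3 ∧ #B = 3 ∧ Even #(A ∩ B) := by
    obtain ⟨M, hM⟩ := card_pos.1 (pos_of_gt hcard)
    obtain ⟨hM, hA_trans, hB_trans, heven⟩ := mem_filter.1 hM
    exact ⟨hA_trans.card_eq_three (Fintype.card_fin 6) hM,
      hB_trans.card_eq_three (Fintype.card_fin 6) hM, heven⟩
  have hinter : #(A ∩ B) = 2 := by
    have := card_pos.2 hAB
    have := card_le_card (inter_subset_left : A ∩ B ⊆ A)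
    obtain ⟨k, hk⟩ := heven
    omega
  have hA_sdiff : #(A \ B) = 1 := by have := card_inter_add_card_sdiff A B; omega
  have hB_sdiff : #(B \ A) = 1 := by
    have := card_inter_add_card_sdiff B A; rw [inter_comm] at this; omega
  have hsymm : #(symmDiff A B) = 2 := by
    rw [symmDiff_def, sup_eq_union, card_union_of_disjoint disjoint_sdiff_sdiff, hA_sdiff, hB_sdiff]
  obtain ⟨M₀, hM₀, hsymm_mem, hinter_mem⟩ := exists_mem_perfectMatchings_of_disjoint
    (Fintype.card_fin 6) hsymm hinter (disjoint_symmDiff_inf A B)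
  have hssub : {M ∈ perfectMatchings (Fin 6) | AreOpposite M A B} ⊂
      {M ∈ perfectMatchings (Fin 6) | symmDiff A B ∈ M} := by
    refine (ssubset_iff_of_subset fun M hM ↦ ?_).2
      ⟨M₀, mem_filter.2 ⟨hM₀, hsymm_mem⟩, fun hM₀_opp ↦ ?_⟩
    · obtain ⟨hM, hA_trans, hB_trans, -⟩ := mem_filter.1 hM
      obtain ⟨-, hpair, hcover⟩ := mem_perfectMatchings.1 hM
      exact mem_filter.2
        ⟨hM, symmDiff_mem_of_isTransversal hpair hcover hA_trans hB_trans hA_sdiff hB_sdiff⟩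
    · have := (mem_filter.1 hM₀_opp).2.1 _ hinter_mem
      rw [← inter_assoc, inter_self] at this
      omega
  have := card_lt_card hssub
  have := card_perfectMatchings_mem_le _ hsymm
  omega

theorem exists_eq_pair_compl_of_forall_paschConfiguration
    (hP : ∀ p ∈ P, #p = 2) (hPcard : #P ≤ 4) (hTcard : #T ≤ 2)
    (hpasch : ∀ M ∈ perfectMatchings (Fin 6), Disjoint M P → ∀ A, IsTransversal M A →
      ∃ B ∈ T, B ∈ paschConfiguration M A) :
    ∃ A, #A = 3 ∧ T = {A, Aᶜ} := by
  have hgood : 3 ≤ #{M ∈ perfectMatchings (Fin 6) | Disjoint M P} := by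
    have := fifteen_le_card_perfectMatchings_disjoint_add hP
    omega
  have hopp (M) (hM : M ∈ perfectMatchings (Fin 6)) (hMP : Disjoint M P) :=
    exists_areOpposite (Fintype.card_fin 6) hM (hpasch M hM hMP)
  obtain ⟨M₀, hM₀⟩ := card_pos.1 (pos_of_gt hgood)
  obtain ⟨hM₀, hM₀P⟩ := mem_filter.1 hM₀
  obtain ⟨A, hA, B, hB, hAB⟩ := hopp M₀ hM₀ hM₀P
  have hA_card := hAB.1.card_eq_three (Fintype.card_fin 6) hM₀
  have hB_card := hAB.2.1.card_eq_three (Fintype.card_fin 6) hM₀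
  obtain rfl : {A, B} = T := eq_of_subset_of_card_le (by simp [insert_subset_iff, hA, hB])
    (hTcard.trans (card_pair (hAB.ne (hA_card ▸ by decide))).ge)
  have hsub : {M ∈ perfectMatchings (Fin 6) | Disjoint M P} ⊆
      {M ∈ perfectMatchings (Fin 6) | AreOpposite M A B} := by
    intro M hM
    obtain ⟨hM, hMP⟩ := mem_filter.1 hM
    exact mem_filter.2 ⟨hM, areOpposite_of_mem_pair (Fintype.card_fin 6) hM (hopp M hM hMP)⟩
  have hdisj : Disjoint A B := by
    by_contra hAB_inter
    have := card_areOpposite_le_two (not_disjoint_iff_nonempty_inter.1 hAB_inter)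
    have := card_le_card hsub
    omega
  obtain rfl : B = Aᶜ := eq_of_subset_of_card_le (subset_compl_iff_disjoint_left.2 hdisj)
    (by rw [card_compl, hA_card, hB_card, Fintype.card_fin])
  exact ⟨A, hA_card, rfl⟩

end SixPoints

section Fano

open Finset

variable {α β : Type*} [DecidableEq α]

lemma containsFano_of_paschConfiguration [Fintype β] [DecidableEq β] (hβ : Fintype.card β = 6)
    {E : Finset (Finset α)} {v : α} {f : β ↪ α} (hv : v ∉ Set.range f) {M : Finset (Finset β)}
    (hM : M ∈ perfectMatchings β) {A : Finset β} (hA : IsTransversal M A)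
    (hlink : ∀ p ∈ M, insert v (p.map f) ∈ E)
    (hpasch : ∀ B ∈ paschConfiguration M A, B.map f ∈ E) : ContainsFano E := by
  obtain ⟨w, rfl, rfl⟩ := exists_embedding_of_isTransversal hβ hM hA
  have hline (p) (hp : p ∈ ({{1, 0}, {2, 5}, {3, 4}} : Finset (Finset (Fin 6)))) :
      insert v ((p.map w).map f) ∈ E := hlink _ (mem_image_of_mem _ hp)
  have hplane (B) (hB : B ∈ paschConfiguration {{1, 0}, {2, 5}, {3, 4}} {1, 2, 3}) :
      (B.map w).map f ∈ E := hpasch _ (map_mem_paschConfiguration hB w)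
  have hv_range : v ∉ Set.range (f ∘ w) := fun ⟨i, hi⟩ ↦ hv ⟨w i, hi⟩
  refine ⟨Fin.cons v (f ∘ w),
    Fin.cons_injective_iff.2 ⟨hv_range, f.injective.comp w.injective⟩, ?_⟩
  have h₀₁₂ := hline {1, 0} (by decide)
  have h₀₃₆ := hline {2, 5} (by decide)
  have h₀₄₅ := hline {3, 4} (by decide)
  have h₂₃₄ := hplane {1, 2, 3} (by decide)
  have h₂₅₆ := hplane {1, 4, 5} (by decide)
  have h₁₄₆ := hplane {0, 3, 5} (by decide)
  have h₁₃₅ := hplane {0, 2, 4} (by decide)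
  simp only [map_insert, map_singleton] at *
  exact ⟨pair_comm (f (w 0)) _ ▸ h₀₁₂, h₂₃₄, h₀₄₅, h₀₃₆, h₂₅₆, h₁₄₆, h₁₃₅⟩

/-- The `k`-subsets of `β` whose copies under `f` are not in `𝒜`. -/
def missingSets [Fintype β] (f : β ↪ α) (k : ℕ) (𝒜 : Finset (Finset α)) : Finset (Finset β) :=
  {p ∈ powersetCard k univ | p.map f ∉ 𝒜}

lemma mem_missingSets [Fintype β] {f : β ↪ α} {k : ℕ} {𝒜 : Finset (Finset α)} {p : Finset β} :
    p ∈ missingSets f k 𝒜 ↔ #p = k ∧ p.map f ∉ 𝒜 := by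
  simp [missingSets]

lemma card_missingSets_add_card [Fintype β] (f : β ↪ α) {k : ℕ} {𝒜 : Finset (Finset α)}
    (h𝒜 : 𝒜 ⊆ (univ.map f).powersetCard k) :
    #(missingSets f k 𝒜) + #𝒜 = (Fintype.card β).choose k := by
  have hmap : (missingSets f k 𝒜).map (mapEmbedding f).toEmbedding =
      (univ.map f).powersetCard k \ 𝒜 := by
    rw [powersetCard_map, ← filter_notMem_eq_sdiff, filter_map]
    rfl
  rw [← card_map (mapEmbedding f).toEmbedding, hmap, card_sdiff_add_card_eq_card h𝒜,
    card_powersetCard, card_map, card_univ]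

lemma memberSubfamily_subset_powersetCard {E : Finset (Finset α)} {V : Finset α} {k : ℕ}
    (hE : E ⊆ V.powersetCard (k + 1)) (v : α) :
    E.memberSubfamily v ⊆ (V.erase v).powersetCard k := by
  intro p hp
  obtain ⟨hpE, hvp⟩ := mem_memberSubfamily.1 hp
  obtain ⟨hpV, hpcard⟩ := mem_powersetCard.1 (hE hpE)
  rw [card_insert_of_notMem hvp] at hpcard
  exact mem_powersetCard.2
    ⟨subset_erase.2 ⟨(subset_insert v p).trans hpV, hvp⟩, Nat.succ_injective hpcard⟩

lemma nonMemberSubfamily_subset_powersetCard {E : Finset (Finset α)} {V : Finset α} {k : ℕ}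
    (hE : E ⊆ V.powersetCard k) (v : α) :
    E.nonMemberSubfamily v ⊆ (V.erase v).powersetCard k := by
  intro e he
  obtain ⟨heE, hve⟩ := mem_nonMemberSubfamily.1 he
  obtain ⟨heV, hecard⟩ := mem_powersetCard.1 (hE heE)
  exact mem_powersetCard.2 ⟨subset_erase.2 ⟨heV, hve⟩, hecard⟩

lemma card_memberSubfamily (E : Finset (Finset α)) (v : α) :
    #(E.memberSubfamily v) = #{e ∈ E | v ∈ e} :=
  card_image_of_injOn fun s hs t ht hst ↦ by
    rw [← insert_erase (mem_filter.1 hs).2, ← insert_erase (mem_filter.1 ht).2]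
    exact congrArg (insert v) hst

lemma inter_nonempty_iff_ne {X Y e : Finset α} (he : e ⊆ X ∪ Y) (hXY : Disjoint X Y)
    (hcard : #e = #Y) : (e ∩ X).Nonempty ↔ e ≠ Y := by
  rw [← not_disjoint_iff_nonempty_inter, not_iff_not]
  refine ⟨fun h ↦ eq_of_subset_of_card_le (h.left_le_of_le_sup_left he) hcard.ge, ?_⟩
  rintro rfl
  exact hXY.symm

lemma exists_missingSets_eq_pair_compl {E : Finset (Finset α)} (hF : ¬ContainsFano E) {v : α}
    {f : Fin 6 ↪ α} (hv : v ∉ Set.range f) (hlink : #(missingSets f 2 (E.memberSubfamily v)) ≤ 4)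
    (hrest : #(missingSets f 3 (E.nonMemberSubfamily v)) ≤ 2) :
    ∃ A, #A = 3 ∧ missingSets f 3 (E.nonMemberSubfamily v) = {A, Aᶜ} := by
  refine exists_eq_pair_compl_of_forall_paschConfiguration (fun p hp ↦ (mem_missingSets.1 hp).1)
    hlink hrest fun M hM hdisj A hA ↦ ?_
  by_contra! hpasch
  refine hF (containsFano_of_paschConfiguration (Fintype.card_fin 6) hv hM hA
    (fun p hp ↦ ?_) fun B hB ↦ ?_)
  · by_contra hpE
    exact disjoint_left.1 hdisj hp (mem_missingSets.2
      ⟨(mem_perfectMatchings.1 hM).2.1 p hp, fun h ↦ hpE (mem_memberSubfamily.1 h).1⟩)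
  · by_contra hBE
    have hB_card := (mem_filter.1 hB).2.1.card_eq_three (Fintype.card_fin 6) hM
    exact hpasch B (mem_missingSets.2 ⟨hB_card, fun h ↦ hBE (mem_nonMemberSubfamily.1 h).1⟩) hB

lemma mem_iff_inter_nonempty_of_missingSets_eq [Fintype β] [DecidableEq β]
    {f : β ↪ α} {k : ℕ} {𝒜 : Finset (Finset α)} {A : Finset β}
    (h : missingSets f k 𝒜 = {A, Aᶜ}) {e : Finset α} (he : e ∈ (univ.map f).powersetCard k) :
    e ∈ 𝒜 ↔ (e ∩ A.map f).Nonempty ∧ (e ∩ Aᶜ.map f).Nonempty := by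
  rw [powersetCard_map] at he
  obtain ⟨t, ht, rfl⟩ := mem_map.1 he
  have hmissing (B) (hB : B ∈ ({A, Aᶜ} : Finset _)) : #B = k := (mem_missingSets.1 (h ▸ hB)).1
  have hiff : t ∈ missingSets f k 𝒜 ↔ t = A ∨ t = Aᶜ := by rw [h, mem_insert, mem_singleton]
  have ht_card := (mem_powersetCard.1 ht).2
  have hA : (t ∩ A).Nonempty ↔ t ≠ Aᶜ := inter_nonempty_iff_ne
    (by rw [union_compl]; exact subset_univ t) disjoint_compl_right
    (by rw [ht_card, hmissing _ (mem_insert_of_mem (mem_singleton_self _))])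
  have hA_compl : (t ∩ Aᶜ).Nonempty ↔ t ≠ A := inter_nonempty_iff_ne
    (by rw [union_comm, union_compl]; exact subset_univ t) disjoint_compl_left
    (by rw [ht_card, hmissing _ (mem_insert_self _ _)])
  rw [RelEmbedding.coe_toEmbedding, mapEmbedding_apply, ← map_inter, ← map_inter, map_nonempty,
    map_nonempty, hA, hA_compl]
  rw [mem_missingSets] at hiff
  tauto

theorem induced_B6_general {V : Finset α} (hV : #V = 7) {E : Finset (Finset α)}
    (hE : E ⊆ V.powersetCard 3) (hF : ¬ContainsFano E) {v : α}
    (hv : v ∈ V) (hdeg : 11 ≤ #{e ∈ E | v ∈ e}) (hrest : 18 ≤ #{e ∈ E | v ∉ e}) :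
    ∃ X Y : Finset α, Disjoint X Y ∧ X ∪ Y = V \ {v} ∧ #X = 3 ∧ #Y = 3 ∧
      ∀ e ⊆ V, #e = 3 → v ∉ e → (e ∈ E ↔ (e ∩ X).Nonempty ∧ (e ∩ Y).Nonempty) := by
  obtain ⟨f, hf⟩ : ∃ f : Fin 6 ↪ α, univ.map f = V.erase v :=
    Function.Embedding.exists_of_card_eq_finset (by simp [card_erase_of_mem hv, hV])
  have hv_range : v ∉ Set.range f := fun ⟨i, hi⟩ ↦ by
    simpa [hi, hf] using mem_map_of_mem f (mem_univ i)
  have hlink : #(missingSets f 2 (E.memberSubfamily v)) + #{e ∈ E | v ∈ e} = 15 :=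
    card_memberSubfamily E v ▸
      card_missingSets_add_card f (hf ▸ memberSubfamily_subset_powersetCard hE v)
  have hinduced : #(missingSets f 3 (E.nonMemberSubfamily v)) + #{e ∈ E | v ∉ e} = 20 :=
    card_missingSets_add_card f (hf ▸ nonMemberSubfamily_subset_powersetCard hE v)
  obtain ⟨A, hA, hmissing⟩ :=
    exists_missingSets_eq_pair_compl hF hv_range (by omega) (by omega)
  refine ⟨A.map f, Aᶜ.map f, (disjoint_map f).2 disjoint_compl_right, ?_, ?_, ?_, ?_⟩
  · rw [← map_union, union_compl, hf, sdiff_singleton_eq_erase]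
  · rw [card_map, hA]
  · rw [card_map, card_compl, hA, Fintype.card_fin]
  · intro e heV he hve
    rw [← mem_iff_inter_nonempty_of_missingSets_eq hmissing (mem_powersetCard.2
      ⟨hf ▸ subset_erase.2 ⟨heV, hve⟩, he⟩), mem_nonMemberSubfamily, and_iff_left hve]

end Fano

/-- If a Fano-free hypergraph on `7` vertices has a vertex `v` of degree at least `11`
with at least `18` edges avoiding `v`, then `H ∖ v` is isomorphic to `B_6`. -/
theorem induced_B6 (E : Finset (Finset (Fin 7))) (h3 : ∀ e ∈ E, e.card = 3)
    (hF : ¬ ContainsFano E) (v : Fin 7)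
    (hdeg : 11 ≤ (E.filter (fun e => v ∈ e)).card)
    (hrest : 18 ≤ (E.filter (fun e => v ∉ e)).card) :
    ∃ X Y : Finset (Fin 7), Disjoint X Y ∧ X ∪ Y = Finset.univ \ {v} ∧
      X.card = 3 ∧ Y.card = 3 ∧
      ∀ e : Finset (Fin 7), e.card = 3 → v ∉ e →
        (e ∈ E ↔ (e ∩ X).Nonempty ∧ (e ∩ Y).Nonempty) := by
  obtain ⟨X, Y, hdisj, hunion, hX, hY, hmem⟩ := induced_B6_general (Finset.card_fin 7)
    (fun e he ↦ Finset.mem_powersetCard_univ.2 (h3 e he)) hF (Finset.mem_univ v) hdeg hrest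
  exact ⟨X, Y, hdisj, hunion, hX, hY, fun e ↦ hmem e (Finset.subset_univ e)⟩
end

section
/- Let H be a 3-uniform hypergraph on 8 vertices not containing the Fano plane. If H contains a complete 3-uniform hypergraph on 6 vertices (i.e., some 6-element set of vertices all of whose 3-element subsets are edges of H), then H has at most 46 edges; in particular fewer than b(8) = 48 edges. -/
/-!
In the Fano plane the three lines through a point `x` induce a perfect matching of the remaining six
points, and the other four lines lie within those six points. So if `K` is a clique on six
vertices and `x ∉ K`, a Fano-free hypergraph misses a triple `{x} ∪ p` with `p` in any given perfect
matching of `K`. As `K₆` decomposes into five perfect matchings, each `x ∉ K` accounts for at least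
five missing triples meeting `K` in exactly two vertices, and these differ for different `x`.
-/

section

open Finset Function

variable {α : Type*} [DecidableEq α]

/-- The perfect matching of the six vertices `u 0, …, u 5` that the lines through `x` induce when
`x, u 0, …, u 5` are the vertices of a Fano plane in the order of `ContainsFano`. -/
def fanoMatching (u : Fin 6 → α) : Finset (Finset α) := {{u 0, u 1}, {u 2, u 5}, {u 3, u 4}}

/-- The permutation of `Fin 6` that fixes `0` and rotates `1, …, 5` by `i` places, used to
decompose `K₆` into perfect matchings as in the round-robin schedule of a tournament. -/
def roundRobin (i : Fin 5) : Fin 6 → Fin 6 := Fin.cons 0 fun k ↦ (i + k).succ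

lemma roundRobin_injective (i : Fin 5) : Injective (roundRobin i) :=
  Fin.cons_injective_iff.2 ⟨by simp [Fin.succ_ne_zero],
    (Fin.succ_injective 5).comp (add_right_injective i)⟩

lemma fanoMatching_comp {β : Type*} [DecidableEq β] (f : α → β) (u : Fin 6 → α) :
    fanoMatching (f ∘ u) = (fanoMatching u).image (Finset.image f) := by
  simp only [fanoMatching, comp_apply, image_insert, image_singleton]

lemma fanoMatching_subset_powersetCard {u : Fin 6 → α} (hu : Injective u) {K : Finset α}
    (huK : ∀ j, u j ∈ K) : fanoMatching u ⊆ K.powersetCard 2 := by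
  simp [fanoMatching, insert_subset_iff, huK, hu.ne_iff]

lemma pairwise_disjoint_fanoMatching_roundRobin {u : Fin 6 → α} (hu : Injective u) :
    Pairwise (Disjoint on fun i ↦ fanoMatching (u ∘ roundRobin i)) := by
  have disjoint_in_fin : ∀ i j, i ≠ j →
      Disjoint (fanoMatching (roundRobin i)) (fanoMatching (roundRobin j)) := by
    decide
  intro i j hij
  simpa only [onFun, fanoMatching_comp, disjoint_image (image_injective hu)]
    using disjoint_in_fin i j hij

lemma containsFano_of_fanoMatching {E : Finset (Finset α)} {K : Finset α}
    (hclique : ∀ e ⊆ K, #e = 3 → e ∈ E) {x : α} (hx : x ∉ K) {u : Fin 6 → α} (hu : Injective u)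
    (huK : ∀ j, u j ∈ K) (hstar : ∀ p ∈ fanoMatching u, insert x p ∈ E) : ContainsFano E := by
  have hinj : Injective (Fin.cons x u : Fin 7 → α) :=
    Fin.cons_injective_iff.2 ⟨by rintro ⟨j, rfl⟩; exact hx (huK j), hu⟩
  have triple_mem (i j k : Fin 6) (hijk : #{i, j, k} = 3) : {u i, u j, u k} ∈ E := by
    refine hclique _ (by simp [insert_subset_iff, huK]) ?_
    simpa [image_insert] using (card_image_of_injective {i, j, k} hu).trans hijk
  simp only [fanoMatching, mem_insert, mem_singleton, forall_eq_or_imp, forall_eq] at hstar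
  obtain ⟨h01, h25, h34⟩ := hstar
  exact ⟨_, hinj, h01, triple_mem 1 2 3 rfl, h34, h25, triple_mem 1 4 5 rfl, triple_mem 0 3 5 rfl,
    triple_mem 0 2 4 rfl⟩

lemma five_le_card_pairs_insert_notMem {E : Finset (Finset α)} (hF : ¬ ContainsFano E)
    {K : Finset α} (hK : #K = 6) (hclique : ∀ e ⊆ K, #e = 3 → e ∈ E) {x : α} (hx : x ∉ K) :
    5 ≤ #{p ∈ K.powersetCard 2 | insert x p ∉ E} := by
  let u : Fin 6 → α := fun j ↦ (K.equivFinOfCardEq hK).symm j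
  have hu : Injective u := Subtype.val_injective.comp (Equiv.injective _)
  have huK (j : Fin 6) : u j ∈ K := Subtype.property _
  have hur (i : Fin 5) : Injective (u ∘ roundRobin i) := hu.comp (roundRobin_injective i)
  let missing (i : Fin 5) := {p ∈ fanoMatching (u ∘ roundRobin i) | insert x p ∉ E}
  have missing_nonempty (i : Fin 5) : (missing i).Nonempty := by
    rw [filter_nonempty_iff]
    by_contra! hstar
    exact hF (containsFano_of_fanoMatching hclique hx (hur i) (fun _ ↦ huK _) hstar)
  have missing_disjoint : Set.PairwiseDisjoint (univ : Finset (Fin 5)) missing :=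
    fun i _ j _ hij ↦ disjoint_filter_filter (pairwise_disjoint_fanoMatching_roundRobin hu hij)
  calc
    5 = #(univ : Finset (Fin 5)) := rfl
    _ ≤ #(univ.biUnion missing) :=
      card_le_card_biUnion missing_disjoint fun i _ ↦ missing_nonempty i
    _ ≤ #{p ∈ K.powersetCard 2 | insert x p ∉ E} :=
      card_le_card <| biUnion_subset.2 fun i _ ↦
        filter_subset_filter _ (fanoMatching_subset_powersetCard (hur i) fun _ ↦ huK _)

lemma sum_card_powersetCard_insert_notMem_le [Fintype α] (E : Finset (Finset α)) (K : Finset α)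
    (r : ℕ) :
    ∑ x ∈ Kᶜ, #{p ∈ K.powersetCard r | insert x p ∉ E} ≤
      #(powersetCard (r + 1) univ \ E) := by
  rw [← card_sigma]
  refine card_le_card_of_injOn (fun q ↦ insert q.1 q.2) ?_ ?_
  · rintro ⟨x, p⟩ hq
    simp only [coe_sigma, Set.mem_sigma_iff, mem_coe, mem_compl, mem_filter,
      mem_powersetCard] at hq
    obtain ⟨hx, ⟨hpK, hp⟩, hxp⟩ := hq
    simp [hxp, card_insert_of_notMem (notMem_mono hpK hx), hp]
  · rintro ⟨x, p⟩ hq ⟨y, p'⟩ hq' heq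
    simp only [coe_sigma, Set.mem_sigma_iff, mem_coe, mem_compl, mem_filter,
      mem_powersetCard] at hq hq' heq
    have inter_eq {z : α} {s : Finset α} (hz : z ∉ K) (hs : s ⊆ K) : insert z s ∩ K = s := by
      rw [insert_inter_of_notMem hz, inter_eq_left.2 hs]
    obtain rfl : p = p' := by
      rw [← inter_eq hq.1 hq.2.1.1, heq, inter_eq hq'.1 hq'.2.1.1]
    obtain rfl : x = y := (insert_inj (notMem_mono hq.2.1.1 hq.1)).1 heq
    rfl

theorem K6_implies_few_edges_general [Fintype α] (E : Finset (Finset α))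
    (h3 : ∀ e ∈ E, #e = 3) (hF : ¬ ContainsFano E) (K : Finset α) (hK : #K = 6)
    (hclique : ∀ e ⊆ K, #e = 3 → e ∈ E) :
    #E + 5 * #Kᶜ ≤ (Fintype.card α).choose 3 := by
  have hE : E ⊆ powersetCard 3 univ := fun e he ↦ mem_powersetCard_univ.2 (h3 e he)
  have five_mul_le : 5 * #Kᶜ ≤ #(powersetCard 3 univ \ E) :=
    calc
      5 * #Kᶜ = ∑ x ∈ Kᶜ, 5 := by rw [sum_const, smul_eq_mul, mul_comm]
      _ ≤ ∑ x ∈ Kᶜ, #{p ∈ K.powersetCard 2 | insert x p ∉ E} := sum_le_sum fun x hx ↦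
        five_le_card_pairs_insert_notMem hF hK hclique (mem_compl.1 hx)
      _ ≤ #(powersetCard 3 univ \ E) := sum_card_powersetCard_insert_notMem_le E K 2
  calc
    #E + 5 * #Kᶜ ≤ #E + #(powersetCard 3 univ \ E) := by gcongr
    _ = #(powersetCard 3 (univ : Finset α)) := by rw [add_comm, card_sdiff_add_card_eq_card hE]
    _ = (Fintype.card α).choose 3 := by rw [card_powersetCard, card_univ]

end

/-- A Fano-free hypergraph on `8` vertices containing a complete `3`-uniform hypergraph
on `6` vertices has at most `46 < b 8 = 48` edges. -/
theorem K6_implies_few_edges (E : Finset (Finset (Fin 8))) (h3 : ∀ e ∈ E, e.card = 3)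
    (hF : ¬ ContainsFano E) (K : Finset (Fin 8)) (hK : K.card = 6)
    (hclique : ∀ e ⊆ K, e.card = 3 → e ∈ E) :
    E.card ≤ 46 ∧ E.card < b 8 := by
  have bound : E.card + 10 ≤ 56 := by
    simpa [Finset.card_compl, hK, Nat.choose] using
      K6_implies_few_edges_general E h3 hF K hK hclique
  exact ⟨by omega, (show E.card < 48 by omega)⟩
end

section
/- Suppose n ≥ 6 is even and H is a 3-uniform hypergraph on n vertices such that for every vertex v of H the induced subhypergraph on the remaining n−1 vertices is isomorphic to B_{n−1}. Then H is isomorphic to B_n; that is, there is a partition of the vertex set of H into two sets of size n/2 such that the edges of H are exactly the triples meeting both parts. -/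
/-!
Write `n = 2k`. The larger part `A v` of each `H ∖ v` has exactly `k` elements. If `u ∉ A v`, then
the triples inside `A v` survive in `H ∖ u` as non-edges, so none of them is cut by `A u`; since
`k ≥ 3` this forces `A v` to lie inside `A u` or to miss it, and the latter is impossible because
`A v`, `A u` and `{u}` do not fit into `2k` vertices. Hence `A v = A u` whenever `u ∉ A v`, so any
two of the sets `A v` are equal or complementary, and a single one of them describes all of `H`.

The argument works for `r`-element edges with `2 ≤ r ≤ k`. For `r ≤ 1` no `r`-set is cut by any
part, and for `r > k` every `r`-set is cut by every part, so there the choice of part is immaterial.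
-/

section Cuts

variable {V : Type*} [DecidableEq V] {A e : Finset V} {r : ℕ}

/-- `A` cuts `e` if `e` meets both `A` and its complement: the edges of the complete bipartite
hypergraph with parts `A` and `Aᶜ` are the sets cut by `A`. -/
def Cuts (A e : Finset V) : Prop :=
  (e ∩ A).Nonempty ∧ (e \ A).Nonempty

theorem not_cuts_of_subset (h : e ⊆ A) : ¬ Cuts A e :=
  fun hcut ↦ hcut.2.ne_empty (Finset.sdiff_eq_empty_iff_subset.mpr h)

theorem Cuts.one_lt_card (h : Cuts A e) : 1 < e.card := by
  have := Finset.card_inter_add_card_sdiff e A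
  have := h.1.card_pos
  have := h.2.card_pos
  omega

theorem Cuts.exists_subset_card_eq (h : Cuts A e) (hr : 1 < r) (hre : r ≤ e.card) :
    ∃ t ⊆ e, t.card = r ∧ Cuts A t := by
  obtain ⟨⟨a, ha⟩, ⟨c, hc⟩⟩ := h
  rw [Finset.mem_inter] at ha
  rw [Finset.mem_sdiff] at hc
  obtain ⟨t, hact, hte, htr⟩ := Finset.exists_subsuperset_card_eq
    (Finset.insert_subset ha.1 (Finset.singleton_subset_iff.mpr hc.1))
    (Finset.card_le_two.trans hr) hre
  rw [Finset.insert_subset_iff, Finset.singleton_subset_iff] at hact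
  exact ⟨t, hte, htr, ⟨a, Finset.mem_inter.mpr ⟨hact.1, ha.2⟩⟩,
    ⟨c, Finset.mem_sdiff.mpr ⟨hact.2, hc.2⟩⟩⟩

theorem cuts_compl_iff [Fintype V] : Cuts Aᶜ e ↔ Cuts A e := by
  rw [Cuts, Cuts, and_comm, sdiff_compl, Finset.inf_eq_inter, Finset.sdiff_eq_inter_compl]

theorem cuts_of_card_lt [Fintype V] (h : A.card < e.card) (h' : Aᶜ.card < e.card) : Cuts A e := by
  constructor
  · rw [← Finset.not_disjoint_iff_nonempty_inter, ← Finset.subset_compl_iff_disjoint_right]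
    exact fun hsub ↦ h'.not_ge (Finset.card_le_card hsub)
  · rw [Finset.sdiff_nonempty]
    exact fun hsub ↦ h.not_ge (Finset.card_le_card hsub)

theorem cuts_left_iff_of_subset_union {X Y : Finset V} (hXY : Disjoint X Y) (he : e ⊆ X ∪ Y) :
    Cuts X e ↔ (e ∩ X).Nonempty ∧ (e ∩ Y).Nonempty := by
  have : e \ X = e ∩ Y := by
    rw [← Finset.inter_eq_left.mpr he, Finset.inter_sdiff_assoc, Finset.union_sdiff_cancel_left hXY,
      Finset.inter_assoc, Finset.inter_eq_right.mpr Finset.subset_union_right]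
  rw [Cuts, this]

end Cuts

section Reconstruction

variable {V : Type*} [Fintype V] [DecidableEq V] {r : ℕ} {E : Finset (Finset V)}

/-- `A` is the larger part of a balanced complete bipartite structure on the `r`-element edges
avoiding `v`, where the number of vertices is even. The smaller part `(insert v A)ᶜ` is implicit,
since a set avoiding `v` meets it exactly when it is not contained in `A`. -/
structure IsLargerPart (r : ℕ) (E : Finset (Finset V)) (v : V) (A : Finset V) : Prop where
  notMem : v ∉ A
  two_mul_card : 2 * A.card = Fintype.card V
  mem_iff_cuts : ∀ e : Finset V, e.card = r → v ∉ e → (e ∈ E ↔ Cuts A e)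

theorem exists_isLargerPart {v : V} {X Y : Finset V} (hV : Even (Fintype.card V))
    (hXY : Disjoint X Y) (hunion : X ∪ Y = Finset.univ \ {v})
    (hbal : ((X.card : ℤ) - (Y.card : ℤ)).natAbs ≤ 1)
    (hE : ∀ e : Finset V, e.card = r → v ∉ e →
      (e ∈ E ↔ (e ∩ X).Nonempty ∧ (e ∩ Y).Nonempty)) :
    ∃ A, IsLargerPart r E v A := by
  have notMem_union : v ∉ X ∪ Y := by simp [hunion]
  rw [Finset.notMem_union] at notMem_union
  have subset_union {e : Finset V} (hve : v ∉ e) : e ⊆ X ∪ Y := by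
    rw [hunion, Finset.subset_sdiff, Finset.disjoint_singleton_right]
    exact ⟨e.subset_univ, hve⟩
  have card_add : X.card + Y.card + 1 = Fintype.card V := by
    rw [← Finset.card_union_of_disjoint hXY, hunion, ← Finset.card_singleton v,
      Finset.card_sdiff_add_card_eq_card (Finset.subset_univ _), Finset.card_univ]
  obtain ⟨k, hk⟩ := hV
  obtain hX | hY : X.card = k ∨ Y.card = k := by omega
  · refine ⟨X, notMem_union.1, by omega, fun e her hve ↦ ?_⟩
    rw [hE e her hve, cuts_left_iff_of_subset_union hXY (subset_union hve)]
  · refine ⟨Y, notMem_union.2, by omega, fun e her hve ↦ ?_⟩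
    rw [hE e her hve, and_comm, cuts_left_iff_of_subset_union hXY.symm]
    exact Finset.union_comm X Y ▸ subset_union hve

namespace IsLargerPart

variable {u v : V} {A B : Finset V}

theorem card_compl (hA : IsLargerPart r E v A) : Aᶜ.card = A.card := by
  have := hA.two_mul_card
  have := A.card_add_card_compl
  omega

theorem not_disjoint (hA : IsLargerPart r E v A) (hB : IsLargerPart r E u B) (hu : u ∉ A) :
    ¬ Disjoint A B := by
  intro hAB
  have hcard : (insert u (A ∪ B)).card = A.card + B.card + 1 := by
    rw [Finset.card_insert_of_notMem (Finset.notMem_union.mpr ⟨hu, hB.notMem⟩),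
      Finset.card_union_of_disjoint hAB]
  have := (insert u (A ∪ B)).card_le_univ
  have := hA.two_mul_card
  have := hB.two_mul_card
  omega

theorem eq_of_notMem (hA : IsLargerPart r E v A) (hB : IsLargerPart r E u B) (hu : u ∉ A)
    (hr : 1 < r) (hrA : r ≤ A.card) : A = B := by
  have not_cuts : ¬ Cuts B A := by
    intro hcut
    obtain ⟨t, htA, htr, htB⟩ := hcut.exists_subset_card_eq hr hrA
    have mem : t ∈ E := (hB.mem_iff_cuts t htr fun h ↦ hu (htA h)).mpr htB
    have notMem : t ∉ E := fun h ↦ not_cuts_of_subset htA <|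
      (hA.mem_iff_cuts t htr fun h ↦ hA.notMem (htA h)).mp h
    exact notMem mem
  have subset : A ⊆ B := by
    by_contra h
    exact not_cuts ⟨Finset.not_disjoint_iff_nonempty_inter.mp (hA.not_disjoint hB hu),
      Finset.sdiff_nonempty.mpr h⟩
  have := hA.two_mul_card
  have := hB.two_mul_card
  exact Finset.eq_of_subset_of_card_le subset (by omega)

theorem eq_or_eq_compl {A : V → Finset V} (hA : ∀ v, IsLargerPart r E v (A v)) (hr : 1 < r)
    (hrV : 2 * r ≤ Fintype.card V) (u v : V) : A u = A v ∨ A u = (A v)ᶜ := by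
  have le_card (w : V) : r ≤ (A w).card := by
    have := (hA w).two_mul_card
    omega
  by_cases h : ∃ w, w ∉ A u ∧ w ∉ A v
  · obtain ⟨w, hwu, hwv⟩ := h
    have hu : A u = A w := (hA u).eq_of_notMem (hA w) hwu hr (le_card u)
    have hv : A v = A w := (hA v).eq_of_notMem (hA w) hwv hr (le_card v)
    exact .inl (hu.trans hv.symm)
  · push Not at h
    have subset : (A v)ᶜ ⊆ A u := fun w hw ↦ by
      by_contra hwu
      exact Finset.mem_compl.mp hw (h w hwu)
    refine .inr (Finset.eq_of_subset_of_card_le subset ?_).symm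
    have := (hA u).two_mul_card
    have := (hA v).two_mul_card
    have := (hA v).card_compl
    omega

theorem cuts_iff_cuts {A : V → Finset V} (hA : ∀ v, IsLargerPart r E v (A v)) (u v : V)
    {e : Finset V} (he : e.card = r) : Cuts (A u) e ↔ Cuts (A v) e := by
  by_cases hr : 1 < r
  · by_cases hrV : 2 * r ≤ Fintype.card V
    · obtain h | h := eq_or_eq_compl hA hr hrV u v
      · rw [h]
      · rw [h, cuts_compl_iff]
    · have cuts (w : V) : Cuts (A w) e := by
        have := (hA w).two_mul_card
        have := (hA w).card_compl
        exact cuts_of_card_lt (by omega) (by omega)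
      exact iff_of_true (cuts u) (cuts v)
  · have not_cuts (w : V) : ¬ Cuts (A w) e := fun h ↦ hr (he ▸ h.one_lt_card)
    exact iff_of_false (not_cuts u) (not_cuts v)

end IsLargerPart

theorem B_n_of_all_vertex_deleted_general (hV : Even (Fintype.card V)) (hr : r ≠ Fintype.card V)
    (hB : ∀ v : V, ∃ X Y : Finset V, Disjoint X Y ∧
      X ∪ Y = Finset.univ \ {v} ∧ ((X.card : ℤ) - (Y.card : ℤ)).natAbs ≤ 1 ∧
      ∀ e : Finset V, e.card = r → v ∉ e →
        (e ∈ E ↔ (e ∩ X).Nonempty ∧ (e ∩ Y).Nonempty)) :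
    ∃ X Y : Finset V, Disjoint X Y ∧ X ∪ Y = Finset.univ ∧
      X.card = Fintype.card V / 2 ∧ Y.card = Fintype.card V / 2 ∧
      ∀ e : Finset V, e.card = r →
        (e ∈ E ↔ (e ∩ X).Nonempty ∧ (e ∩ Y).Nonempty) := by
  have exists_part (v : V) : ∃ A, IsLargerPart r E v A := by
    obtain ⟨X, Y, hXY, hunion, hbal, hE⟩ := hB v
    exact exists_isLargerPart hV hXY hunion hbal hE
  choose A hA using exists_part
  have exists_notMem {e : Finset V} (he : e.card = r) : ∃ u, u ∉ e := by
    by_contra! h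
    exact hr (he ▸ Finset.card_eq_iff_eq_univ e |>.mpr (Finset.eq_univ_of_forall h))
  obtain hempty | ⟨⟨v⟩⟩ := isEmpty_or_nonempty V
  · refine ⟨∅, ∅, by simp, by simp, by simp, by simp, fun e he ↦ ?_⟩
    exact hempty.elim (exists_notMem he).choose
  have card_part : (A v).card = Fintype.card V / 2 := by
    have := (hA v).two_mul_card
    omega
  refine ⟨A v, (A v)ᶜ, disjoint_compl_right, Finset.union_compl _, card_part,
    (hA v).card_compl.trans card_part, fun e he ↦ ?_⟩
  obtain ⟨u, hu⟩ := exists_notMem he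
  rw [← Finset.sdiff_eq_inter_compl, (hA u).mem_iff_cuts e he hu]
  exact IsLargerPart.cuts_iff_cuts hA u v he

end Reconstruction

/-- If `n ≥ 6` is even and every vertex-deleted subhypergraph of `H` is isomorphic to
`B_{n-1}`, then `H` is isomorphic to `B_n`. -/
theorem B_n_of_all_vertex_deleted (n : ℕ) (hn : 6 ≤ n) (hEven : Even n)
    (E : Finset (Finset (Fin n))) (h3 : ∀ e ∈ E, e.card = 3)
    (hB : ∀ v : Fin n, ∃ X Y : Finset (Fin n), Disjoint X Y ∧
      X ∪ Y = Finset.univ \ {v} ∧ ((X.card : ℤ) - (Y.card : ℤ)).natAbs ≤ 1 ∧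
      ∀ e : Finset (Fin n), e.card = 3 → v ∉ e →
        (e ∈ E ↔ (e ∩ X).Nonempty ∧ (e ∩ Y).Nonempty)) :
    ∃ X Y : Finset (Fin n), Disjoint X Y ∧ X ∪ Y = Finset.univ ∧
      X.card = n / 2 ∧ Y.card = n / 2 ∧
      ∀ e : Finset (Fin n), e.card = 3 →
        (e ∈ E ↔ (e ∩ X).Nonempty ∧ (e ∩ Y).Nonempty) := by
  simpa only [Fintype.card_fin] using B_n_of_all_vertex_deleted_general (r := 3) (E := E)
    (by rwa [Fintype.card_fin]) (by rw [Fintype.card_fin]; omega) hB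
end

section
/- For every n ≥ 4, the maximum total number of edges of a 4-multigraph on n vertices that does not contain three crossing pairs is exactly 2·C(n,2) + 2·⌊n²/4⌋; that is, every 4-tuple (G_1, G_2, G_3, G_4) of simple graphs on a common n-element vertex set without three crossing pairs satisfies e(G_1)+e(G_2)+e(G_3)+e(G_4) ≤ 2·C(n,2) + 2·⌊n²/4⌋, and this bound is attained. -/
/-- A `p`-multigraph `G` (a `p`-tuple of simple graphs on a common vertex set) contains
three crossing pairs if there are three distinct indices `i, j, k` and four distinct
vertices `w, x, y, z` with `wx, yz ∈ G i`, `wy, xz ∈ G j`, and `wz, xy ∈ G k`. -/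
def HasThreeCrossingPairs {p : ℕ} {V : Type*} (G : Fin p → SimpleGraph V) : Prop :=
  ∃ i j k : Fin p, i ≠ j ∧ i ≠ k ∧ j ≠ k ∧
    ∃ w x y z : V, w ≠ x ∧ w ≠ y ∧ w ≠ z ∧ x ≠ y ∧ x ≠ z ∧ y ≠ z ∧
      (G i).Adj w x ∧ (G i).Adj y z ∧
      (G j).Adj w y ∧ (G j).Adj x z ∧
      (G k).Adj w z ∧ (G k).Adj x y

/-!
Write `m(e)` for the number of graphs `G i` containing the pair `e`. Four vertices `a, b, c, d`
carry three perfect matchings, and `ab` and `cd` share at least `m(ab) + m(cd) - 4` indices. Without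
three crossing pairs the three sets of shared indices have no system of distinct representatives,
so by Hall's theorem one of them is empty or their sizes sum to at most `6`; hence four vertices
span at most `20` edges.

The upper bound goes by induction, removing a few vertices at a time. If every triangle spans at
most `10` edges, remove a pair of multiplicity `4`, to which every other vertex sends at most `6`
edges; if no such pair exists, multiplicities are at most `3`, which is few enough. A triangle
spanning `12` edges receives at most `8` from every other vertex and can be removed. A triangle
spanning `11` edges receives at most `9`. This exceeds the admissible total only if every other
vertex sends exactly `9`, and then all multiplicities outside the triangle are at most `1`.

Equality holds when the vertex set is split into halves `A` and `B`, two graphs consist of all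
pairs that meet `A`, and the other two of all pairs that meet `B`.
-/

open Finset

theorem exists_injective_mem_of_card_add_two_lt_sum_card {α : Type*} [Fintype α]
    (hα : 4 ≤ Fintype.card α) {f : Fin 3 → Finset α} (hf : ∀ i, (f i).Nonempty)
    (hsum : Fintype.card α + 2 < ∑ i, #(f i)) :
    ∃ g : Fin 3 → α, Function.Injective g ∧ ∀ i, g i ∈ f i := by
  classical
  refine (all_card_le_biUnion_card_iff_exists_injective f).1 fun s => ?_
  by_contra! hs
  have h_inside : ∑ i ∈ s, #(f i) ≤ #s * #(s.biUnion f) :=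
    sum_le_card_nsmul _ _ _ fun i hi => card_le_card (subset_biUnion_of_mem f hi)
  have h_outside : ∑ i ∈ sᶜ, #(f i) ≤ #sᶜ * Fintype.card α :=
    sum_le_card_nsmul _ _ _ fun i _ => card_le_univ (f i)
  have h_total := sum_add_sum_compl s fun i => #(f i)
  have h_card : #s + #sᶜ = 3 := card_add_card_compl s
  have h_union_pos : 0 < #(s.biUnion f) := by
    obtain ⟨i, hi⟩ := card_pos.1 (pos_of_gt hs)
    exact card_pos.2 ((hf i).mono (subset_biUnion_of_mem f hi))
  obtain ⟨hs, hc⟩ | ⟨hs, hc⟩ : #s = 2 ∧ #sᶜ = 1 ∨ #s = 3 ∧ #sᶜ = 0 := by omega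
  all_goals
    rw [hs] at h_inside
    rw [hc] at h_outside
    omega

section EdgeCount

variable {ι V : Type*} [Fintype ι] (G : ι → SimpleGraph V)

open scoped Classical in
/-- The set of indices of the graphs of a multigraph that contain the pair `e`. -/
noncomputable def edgeColors (e : Sym2 V) : Finset ι := {i | e ∈ (G i).edgeSet}

/-- The multiplicity of the pair `e` in a multigraph: the number of its graphs that contain `e`. -/
noncomputable def edgeMult (e : Sym2 V) : ℕ := #(edgeColors G e)

/-- The total number of edges that the graphs of a multigraph have inside `S`. The diagonal
elements of `S.sym2` have multiplicity `0`. -/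
noncomputable def edgeCount (S : Finset V) : ℕ := ∑ e ∈ S.sym2, edgeMult G e

variable {G}

@[simp]
theorem mem_edgeColors {e : Sym2 V} {i : ι} : i ∈ edgeColors G e ↔ e ∈ (G i).edgeSet := by
  simp [edgeColors]

theorem edgeMult_le_card (e : Sym2 V) : edgeMult G e ≤ Fintype.card ι :=
  card_le_univ _

theorem edgeMult_of_isDiag {e : Sym2 V} (he : e.IsDiag) : edgeMult G e = 0 :=
  card_eq_zero.2 <| eq_empty_of_forall_notMem fun i hi =>
    (G i).not_isDiag_of_mem_edgeSet (mem_edgeColors.1 hi) he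

theorem edgeMult_self (v : V) : edgeMult G s(v, v) = 0 :=
  edgeMult_of_isDiag (Sym2.mk_isDiag_iff.2 rfl)

theorem edgeCount_univ [Fintype V] : edgeCount G univ = ∑ i, (G i).edgeSet.ncard := by
  classical
  simp only [edgeCount, edgeMult, edgeColors, sym2_univ]
  refine (sum_card_bipartiteAbove_eq_sum_card_bipartiteBelow fun e i => e ∈ (G i).edgeSet).trans ?_
  refine sum_congr rfl fun i _ => ?_
  simp [← Set.ncard_coe_finset, bipartiteBelow]

@[simp]
theorem edgeCount_empty : edgeCount G ∅ = 0 := by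
  simp [edgeCount]

@[simp]
theorem edgeCount_singleton (v : V) : edgeCount G {v} = 0 := by
  simp [edgeCount, edgeMult_of_isDiag]

theorem card_filter_not_isDiag_sym2 [DecidableEq V] (S : Finset V) :
    #{e ∈ S.sym2 | ¬e.IsDiag} = (#S).choose 2 := by
  rw [sym2_eq_image, Sym2.filter_image_mk_not_isDiag, Sym2.card_image_offDiag]

theorem edgeCount_eq_sum_not_isDiag [DecidableEq V] (S : Finset V) :
    edgeCount G S = ∑ e ∈ S.sym2 with ¬e.IsDiag, edgeMult G e :=
  (sum_filter_of_ne fun _ _ he => mt edgeMult_of_isDiag he).symm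

theorem edgeCount_le_mul_choose {S : Finset V} {d : ℕ} (h : ∀ e ∈ S.sym2, edgeMult G e ≤ d) :
    edgeCount G S ≤ d * (#S).choose 2 := by
  classical
  rw [edgeCount_eq_sum_not_isDiag, ← card_filter_not_isDiag_sym2, mul_comm]
  exact sum_le_card_nsmul _ _ _ fun e he => h e (mem_of_mem_filter e he)

theorem edgeCount_eq_mul_choose {S : Finset V} {d : ℕ}
    (h : ∀ e ∈ S.sym2, ¬e.IsDiag → edgeMult G e = d) : edgeCount G S = d * (#S).choose 2 := by
  classical
  rw [edgeCount_eq_sum_not_isDiag, ← card_filter_not_isDiag_sym2, mul_comm]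
  exact sum_eq_card_nsmul fun e he => h e (mem_filter.1 he).1 (mem_filter.1 he).2

variable [DecidableEq V]

theorem edgeCount_insert {S : Finset V} {a : V} (ha : a ∉ S) :
    edgeCount G (insert a S) = edgeCount G S + ∑ v ∈ S, edgeMult G s(a, v) := by
  rw [← cons_eq_insert _ _ ha]
  simp only [edgeCount, sym2_cons, sum_disjUnion, sum_map, sum_cons, Sym2.mkEmbedding_apply,
    edgeMult_self, zero_add, add_comm]

theorem edgeCount_pair {a b : V} (hab : a ≠ b) : edgeCount G {a, b} = edgeMult G s(a, b) := by
  simp [edgeCount_insert, hab]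

theorem edgeCount_triple {a b c : V} (hab : a ≠ b) (hac : a ≠ c) (hbc : b ≠ c) :
    edgeCount G {a, b, c} = edgeMult G s(a, b) + edgeMult G s(a, c) + edgeMult G s(b, c) := by
  rw [edgeCount_insert (by simp [hab, hac]), edgeCount_pair hbc, sum_pair hbc]
  omega

theorem edgeCount_union {S T : Finset V} (hST : Disjoint S T) :
    edgeCount G (S ∪ T) =
      edgeCount G S + edgeCount G T + ∑ s ∈ S, ∑ t ∈ T, edgeMult G s(s, t) := by
  induction S using Finset.induction_on with
  | empty => simp
  | insert a S ha ih =>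
    obtain ⟨haT, hST⟩ := disjoint_insert_left.1 hST
    rw [insert_union, edgeCount_insert (by simp [ha, haT]), sum_union hST, ih hST,
      edgeCount_insert ha, sum_insert ha]
    omega

theorem edgeCount_eq_add_sdiff {S T : Finset V} (hTS : T ⊆ S) :
    edgeCount G S =
      edgeCount G T + edgeCount G (S \ T) + ∑ r ∈ S \ T, ∑ t ∈ T, edgeMult G s(r, t) := by
  rw [add_comm (edgeCount G T), ← edgeCount_union sdiff_disjoint, sdiff_union_of_subset hTS]

theorem edgeCount_le_add_sdiff {S T : Finset V} {d : ℕ} (hTS : T ⊆ S)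
    (h : ∀ r ∈ S \ T, ∑ t ∈ T, edgeMult G s(r, t) ≤ d) :
    edgeCount G S ≤ edgeCount G T + edgeCount G (S \ T) + #(S \ T) * d := by
  rw [edgeCount_eq_add_sdiff hTS]
  gcongr
  exact sum_le_card_nsmul _ _ _ h

theorem edgeCount_lt_add_sdiff {S T : Finset V} {d : ℕ} (hTS : T ⊆ S)
    (h : ∀ r ∈ S \ T, ∑ t ∈ T, edgeMult G s(r, t) ≤ d)
    (h_lt : ∃ r ∈ S \ T, ∑ t ∈ T, edgeMult G s(r, t) < d) :
    edgeCount G S < edgeCount G T + edgeCount G (S \ T) + #(S \ T) * d := by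
  rw [edgeCount_eq_add_sdiff hTS, ← smul_eq_mul, ← sum_const]
  exact Nat.add_lt_add_left (sum_lt_sum h h_lt) _

end EdgeCount

section FourVertices

variable {p : ℕ} {V : Type*} {G : Fin p → SimpleGraph V}

theorem edgeMult_add_edgeMult_le (e e' : Sym2 V) :
    edgeMult G e + edgeMult G e' ≤ p + #(edgeColors G e ∩ edgeColors G e') := by
  have h_union := card_le_univ (edgeColors G e ∪ edgeColors G e')
  rw [Fintype.card_fin] at h_union
  have := card_union_add_card_inter (edgeColors G e) (edgeColors G e')
  unfold edgeMult
  omega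

theorem exists_matching_edgeMult_le_or_sum_le (hp : 4 ≤ p) (hG : ¬ HasThreeCrossingPairs G)
    (a b c d : V) :
    edgeMult G s(a, b) + edgeMult G s(c, d) ≤ p ∨
      edgeMult G s(a, c) + edgeMult G s(b, d) ≤ p ∨
      edgeMult G s(a, d) + edgeMult G s(b, c) ≤ p ∨
      edgeMult G s(a, b) + edgeMult G s(a, c) + edgeMult G s(a, d) +
        (edgeMult G s(b, c) + edgeMult G s(b, d) + edgeMult G s(c, d)) ≤ 4 * p + 2 := by
  by_contra! ⟨h₀, h₁, h₂, h_sum⟩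
  let shared : Fin 3 → Finset (Fin p) :=
    ![edgeColors G s(a, b) ∩ edgeColors G s(c, d), edgeColors G s(a, c) ∩ edgeColors G s(b, d),
      edgeColors G s(a, d) ∩ edgeColors G s(b, c)]
  have h_shared₀ : _ ≤ p + #(shared 0) := edgeMult_add_edgeMult_le s(a, b) s(c, d)
  have h_shared₁ : _ ≤ p + #(shared 1) := edgeMult_add_edgeMult_le s(a, c) s(b, d)
  have h_shared₂ : _ ≤ p + #(shared 2) := edgeMult_add_edgeMult_le s(a, d) s(b, c)
  have h_nonempty : ∀ i, (shared i).Nonempty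
    | 0 => card_pos.1 (by omega)
    | 1 => card_pos.1 (by omega)
    | 2 => card_pos.1 (by omega)
  obtain ⟨g, hg, h_mem⟩ := exists_injective_mem_of_card_add_two_lt_sum_card (f := shared)
    (by rwa [Fintype.card_fin]) h_nonempty (by rw [Fintype.card_fin, Fin.sum_univ_three]; omega)
  have h_mem₀ : g 0 ∈ edgeColors G s(a, b) ∩ edgeColors G s(c, d) := h_mem 0
  have h_mem₁ : g 1 ∈ edgeColors G s(a, c) ∩ edgeColors G s(b, d) := h_mem 1
  have h_mem₂ : g 2 ∈ edgeColors G s(a, d) ∩ edgeColors G s(b, c) := h_mem 2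
  simp only [mem_inter, mem_edgeColors, SimpleGraph.mem_edgeSet] at h_mem₀ h_mem₁ h_mem₂
  exact hG ⟨g 0, g 1, g 2, hg.ne (by decide), hg.ne (by decide), hg.ne (by decide), a, b, c, d,
    h_mem₀.1.ne, h_mem₁.1.ne, h_mem₂.1.ne, h_mem₂.2.ne, h_mem₁.2.ne, h_mem₀.2.ne,
    h_mem₀.1, h_mem₀.2, h_mem₁.1, h_mem₁.2, h_mem₂.1, h_mem₂.2⟩

theorem sum_edgeMult_four_vertices_le (hp : 4 ≤ p) (hG : ¬ HasThreeCrossingPairs G)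
    (a b c d : V) :
    edgeMult G s(a, b) + edgeMult G s(a, c) + edgeMult G s(a, d) +
      (edgeMult G s(b, c) + edgeMult G s(b, d) + edgeMult G s(c, d)) ≤ 5 * p := by
  have h_le (e : Sym2 V) : edgeMult G e ≤ p := by simpa using edgeMult_le_card (G := G) e
  have := h_le s(a, b)
  have := h_le s(a, c)
  have := h_le s(a, d)
  have := h_le s(b, c)
  have := h_le s(b, d)
  have := h_le s(c, d)
  have := exists_matching_edgeMult_le_or_sum_le hp hG a b c d
  omega

theorem edgeCount_le_of_card_eq_four (hp : 4 ≤ p) (hG : ¬ HasThreeCrossingPairs G)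
    {S : Finset V} (hS : #S = 4) : edgeCount G S ≤ 5 * p := by
  classical
  obtain ⟨a, T, haT, rfl, hT⟩ := card_eq_succ.1 hS
  obtain ⟨b, c, d, hbc, hbd, hcd, rfl⟩ := card_eq_three.1 hT
  have := sum_edgeMult_four_vertices_le hp hG a b c d
  rw [edgeCount_insert haT, edgeCount_triple hbc hbd hcd, sum_insert (by simp [hbc, hbd]),
    sum_pair hcd]
  omega

end FourVertices

/-- The extremal number `2·C(n,2) + 2·⌊n²/4⌋` of the theorem, as a function of all `n`. -/
def crossingBound (n : ℕ) : ℕ := 2 * n.choose 2 + 2 * (n ^ 2 / 4)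

theorem add_choose_two (m n : ℕ) : (m + n).choose 2 = m.choose 2 + n.choose 2 + m * n := by
  induction n with
  | zero => simp
  | succ n ih =>
    rw [← add_assoc, Nat.choose_succ_succ', Nat.choose_succ_succ' n, ih, Nat.choose_one_right,
      Nat.choose_one_right]
    ring

theorem sq_div_four_eq_div_two_mul (n : ℕ) : n ^ 2 / 4 = n / 2 * (n - n / 2) := by
  obtain ⟨m, rfl | rfl⟩ := n.even_or_odd'
  · have h_sq : (2 * m) ^ 2 = 4 * (m * m) := by ring
    have h_half : 2 * m / 2 = m := by omega
    have h_compl : 2 * m - m = m := by omega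
    rw [h_sq, h_half, h_compl, Nat.mul_div_cancel_left _ four_pos]
  · have h_sq : (2 * m + 1) ^ 2 = 4 * (m * (m + 1)) + 1 := by ring
    have h_half : (2 * m + 1) / 2 = m := by omega
    have h_compl : 2 * m + 1 - m = m + 1 := by omega
    rw [h_sq, h_half, h_compl]
    omega

theorem crossingBound_eq (n : ℕ) :
    crossingBound n = 2 * (n / 2).choose 2 + 2 * (n - n / 2).choose 2 +
      n / 2 * ((n - n / 2) * 4) := by
  have h_split := add_choose_two (n / 2) (n - n / 2)
  rw [Nat.add_sub_cancel' (n.div_le_self 2)] at h_split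
  rw [crossingBound, sq_div_four_eq_div_two_mul, h_split]
  ring

theorem crossingBound_add_two (n : ℕ) :
    crossingBound (n + 2) = crossingBound n + (6 * n + 4) := by
  have h_sq : (n + 2) ^ 2 = n ^ 2 + 4 * (n + 1) := by ring
  rw [crossingBound, crossingBound, add_choose_two, Nat.choose_self]
  omega

theorem crossingBound_add_le_crossingBound_add_three (n : ℕ) :
    crossingBound n + (9 * n + 10) ≤ crossingBound (n + 3) := by
  have h_sq : (n + 3) ^ 2 = n ^ 2 + (6 * n + 9) := by ring
  have h_choose : (n + 3).choose 2 = n.choose 2 + 3 + n * 3 := add_choose_two n 3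
  rw [crossingBound, crossingBound, h_choose, h_sq]
  obtain ⟨m, rfl | rfl⟩ := n.even_or_odd'
  · have h_even : (2 * m) ^ 2 = 4 * (m * m) := by ring
    omega
  · have h_odd : (2 * m + 1) ^ 2 = 4 * (m * m + m) + 1 := by ring
    omega

theorem three_mul_choose_two_le_crossingBound (n : ℕ) : 3 * n.choose 2 ≤ crossingBound n := by
  induction n using Nat.twoStepInduction with
  | zero => simp
  | one => simp
  | more n ih _ =>
    rw [crossingBound_add_two, add_choose_two, Nat.choose_self]
    omega

section UpperBound

variable {V : Type*} {G : Fin 4 → SimpleGraph V}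

theorem edgeMult_le_four (e : Sym2 V) : edgeMult G e ≤ 4 :=
  edgeMult_le_card e

theorem edgeCount_le_crossingBound_of_triangles_le {S : Finset V}
    (hS : ∀ T ⊆ S, #T = 3 → edgeCount G T ≤ 10) : edgeCount G S ≤ crossingBound #S := by
  classical
  induction S using Finset.strongInduction with
  | H S ih =>
  by_cases h_four : ∃ a ∈ S, ∃ b ∈ S, edgeMult G s(a, b) = 4
  · obtain ⟨a, ha, b, hb, hab_four⟩ := h_four
    have hab : a ≠ b := by
      rintro rfl
      simp [edgeMult_self] at hab_four
    have h_sub : {a, b} ⊆ S := by simp [insert_subset_iff, ha, hb]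
    have h_link : ∀ r ∈ S \ {a, b}, ∑ t ∈ {a, b}, edgeMult G s(r, t) ≤ 6 := by
      intro r hr
      obtain ⟨hrS, hr⟩ := mem_sdiff.1 hr
      have h_triangle := hS (insert r {a, b}) (insert_subset hrS h_sub)
        (by rw [card_insert_of_notMem hr, card_pair hab])
      rw [edgeCount_insert hr, edgeCount_pair hab] at h_triangle
      omega
    have h_rest : edgeCount G (S \ {a, b}) ≤ crossingBound #(S \ {a, b}) :=
      ih _ (sdiff_ssubset h_sub (by simp)) fun T hT => hS T (hT.trans sdiff_subset)
    have h_card : #S = #(S \ {a, b}) + 2 := by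
      rw [← card_pair hab, card_sdiff_add_card_eq_card h_sub]
    have h_count := edgeCount_le_add_sdiff h_sub h_link
    rw [edgeCount_pair hab] at h_count
    rw [h_card, crossingBound_add_two]
    omega
  · push Not at h_four
    have h_three : ∀ e ∈ S.sym2, edgeMult G e ≤ 3 := Sym2.ind fun a b hab =>
      Nat.le_of_lt_succ <| (edgeMult_le_four s(a, b)).lt_of_ne <|
        h_four a (mk_mem_sym2_iff.1 hab).1 b (mk_mem_sym2_iff.1 hab).2
    exact (edgeCount_le_mul_choose h_three).trans (three_mul_choose_two_le_crossingBound #S)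

theorem edgeCount_le_twelve_of_card_eq_three {T : Finset V} (hT : #T = 3) :
    edgeCount G T ≤ 12 := by
  simpa [hT] using edgeCount_le_mul_choose (S := T) fun e _ => edgeMult_le_four (G := G) e

theorem sum_edgeMult_le_of_card_eq_three (hG : ¬ HasThreeCrossingPairs G)
    {T : Finset V} (hT : #T = 3) {r : V} (hr : r ∉ T) :
    ∑ t ∈ T, edgeMult G s(r, t) ≤ 20 - edgeCount G T := by
  classical
  have h_four := edgeCount_le_of_card_eq_four le_rfl hG (S := insert r T)
    (by rw [card_insert_of_notMem hr, hT])
  rw [edgeCount_insert hr] at h_four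
  omega

theorem edgeCount_le_crossingBound_of_triangle_eq_twelve [DecidableEq V]
    (hG : ¬ HasThreeCrossingPairs G) {S T : Finset V} (hTS : T ⊆ S) (hT : #T = 3)
    (hT12 : edgeCount G T = 12) (hS : 5 ≤ #S)
    (h_rest : #(S \ T) ≠ 3 → edgeCount G (S \ T) ≤ crossingBound #(S \ T)) :
    edgeCount G S ≤ crossingBound #S := by
  have h_count := edgeCount_le_add_sdiff (G := G) (d := 8) hTS fun r hr => by
    simpa [hT12] using sum_edgeMult_le_of_card_eq_three hG hT (mem_sdiff.1 hr).2
  have h_card : #S = #(S \ T) + 3 := by rw [← hT, card_sdiff_add_card_eq_card hTS]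
  rw [hT12] at h_count
  rw [h_card]
  by_cases h_three : #(S \ T) = 3
  · have h_twelve := edgeCount_le_twelve_of_card_eq_three (G := G) h_three
    rw [h_three] at h_count ⊢
    have : crossingBound (3 + 3) = 48 := rfl
    omega
  · have := crossingBound_add_le_crossingBound_add_three #(S \ T)
    have := h_rest h_three
    omega

theorem exists_triple_edgeMult_of_edgeCount_eq_eleven [DecidableEq V] {T : Finset V} (hT : #T = 3)
    (hT11 : edgeCount G T = 11) :
    ∃ a b c, a ≠ b ∧ a ≠ c ∧ b ≠ c ∧ T = {a, b, c} ∧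
      edgeMult G s(a, b) = 4 ∧ edgeMult G s(a, c) = 4 ∧ edgeMult G s(b, c) = 3 := by
  obtain ⟨a, b, c, hab, hac, hbc, rfl⟩ := card_eq_three.1 hT
  rw [edgeCount_triple hab hac hbc] at hT11
  have := edgeMult_le_four (G := G) s(a, b)
  have := edgeMult_le_four (G := G) s(a, c)
  have := edgeMult_le_four (G := G) s(b, c)
  obtain h | h | h : edgeMult G s(b, c) = 3 ∨ edgeMult G s(a, c) = 3 ∨ edgeMult G s(a, b) = 3 := by
    omega
  · exact ⟨a, b, c, hab, hac, hbc, rfl, by omega, by omega, h⟩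
  · exact ⟨b, a, c, hab.symm, hbc, hac, insert_comm .., by rw [Sym2.eq_swap]; omega, by omega, h⟩
  · refine ⟨c, a, b, hac.symm, hbc.symm, hab, ?_, ?_, ?_, h⟩
    · grind
    · rw [Sym2.eq_swap]; omega
    · rw [Sym2.eq_swap]; omega

theorem edgeMult_eq_four_of_nine_le (hG : ¬ HasThreeCrossingPairs G) {a b c r : V}
    (hab : edgeMult G s(a, b) = 4) (hac : edgeMult G s(a, c) = 4) (hbc : edgeMult G s(b, c) = 3)
    (hr : 9 ≤ edgeMult G s(r, a) + edgeMult G s(r, b) + edgeMult G s(r, c)) :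
    edgeMult G s(r, b) = 4 ∧ edgeMult G s(r, c) = 4 := by
  have := edgeMult_le_four (G := G) s(r, a)
  have := edgeMult_le_four (G := G) s(r, b)
  have := edgeMult_le_four (G := G) s(r, c)
  have := exists_matching_edgeMult_le_or_sum_le le_rfl hG r a b c
  omega

theorem edgeMult_le_one_of_nine_le_sum (hG : ¬ HasThreeCrossingPairs G)
    {T : Finset V} (hT : #T = 3) (hT11 : edgeCount G T = 11) {u v : V}
    (hu : 9 ≤ ∑ t ∈ T, edgeMult G s(u, t)) (hv : 9 ≤ ∑ t ∈ T, edgeMult G s(v, t)) :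
    edgeMult G s(u, v) ≤ 1 := by
  classical
  obtain ⟨a, b, c, hab, hac, hbc, rfl, h_ab, h_ac, h_bc⟩ :=
    exists_triple_edgeMult_of_edgeCount_eq_eleven hT hT11
  have h_sum (r : V) : ∑ t ∈ {a, b, c}, edgeMult G s(r, t) =
      edgeMult G s(r, a) + edgeMult G s(r, b) + edgeMult G s(r, c) := by
    rw [sum_insert (by simp [hab, hac]), sum_pair hbc, add_assoc]
  obtain ⟨hub, huc⟩ := edgeMult_eq_four_of_nine_le hG h_ab h_ac h_bc (h_sum u ▸ hu)
  obtain ⟨hvb, hvc⟩ := edgeMult_eq_four_of_nine_le hG h_ab h_ac h_bc (h_sum v ▸ hv)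
  have := sum_edgeMult_four_vertices_le le_rfl hG u v b c
  omega

theorem edgeCount_le_crossingBound_of_triangle_eq_eleven [DecidableEq V]
    (hG : ¬ HasThreeCrossingPairs G) {S T : Finset V} (hTS : T ⊆ S) (hT : #T = 3)
    (hT11 : edgeCount G T = 11) (h_max : ∀ T' ⊆ S, #T' = 3 → edgeCount G T' ≤ 11) (hS : 5 ≤ #S)
    (h_rest : #(S \ T) ≠ 3 → edgeCount G (S \ T) ≤ crossingBound #(S \ T)) :
    edgeCount G S ≤ crossingBound #S := by
  have h_link : ∀ r ∈ S \ T, ∑ t ∈ T, edgeMult G s(r, t) ≤ 9 := fun r hr => by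
    simpa [hT11] using sum_edgeMult_le_of_card_eq_three hG hT (mem_sdiff.1 hr).2
  have h_card : #S = #(S \ T) + 3 := by rw [← hT, card_sdiff_add_card_eq_card hTS]
  have h_bound := crossingBound_add_le_crossingBound_add_three #(S \ T)
  rw [h_card] at hS ⊢
  by_cases h_lt : ∃ r ∈ S \ T, ∑ t ∈ T, edgeMult G s(r, t) < 9
  · have h_count := edgeCount_lt_add_sdiff hTS h_link h_lt
    by_cases h_three : #(S \ T) = 3
    · have h_eleven := h_max (S \ T) sdiff_subset h_three
      rw [h_three] at h_count ⊢
      have : crossingBound (3 + 3) = 48 := rfl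
      omega
    · have := h_rest h_three
      omega
  · push Not at h_lt
    have h_count := edgeCount_le_add_sdiff hTS h_link
    have h_sparse : edgeCount G (S \ T) ≤ 1 * (#(S \ T)).choose 2 :=
      edgeCount_le_mul_choose <| Sym2.ind fun u v huv =>
        edgeMult_le_one_of_nine_le_sum hG hT hT11 (h_lt u (mk_mem_sym2_iff.1 huv).1)
          (h_lt v (mk_mem_sym2_iff.1 huv).2)
    have h_choose_pos : 0 < (#(S \ T)).choose 2 := Nat.choose_pos (by omega)
    have := three_mul_choose_two_le_crossingBound #(S \ T)
    omega

theorem edgeCount_le_crossingBound (hG : ¬ HasThreeCrossingPairs G) {S : Finset V} (hS : 4 ≤ #S) :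
    edgeCount G S ≤ crossingBound #S := by
  classical
  induction S using Finset.strongInduction with
  | H S ih =>
  obtain hS | hS := hS.eq_or_lt
  · rw [← hS]
    exact edgeCount_le_of_card_eq_four le_rfl hG hS.symm
  -- Three leftover vertices may span `12` edges, although `crossingBound 3 = 10`.
  have h_rest (T : Finset V) (hTS : T ⊆ S) (hT : #T = 3) (h_three : #(S \ T) ≠ 3) :
      edgeCount G (S \ T) ≤ crossingBound #(S \ T) := by
    have h_card : #(S \ T) + 3 = #S := by rw [← hT, card_sdiff_add_card_eq_card hTS]
    obtain h_two | h_two : #(S \ T) = 2 ∨ 4 ≤ #(S \ T) := by omega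
    · have h_le := edgeCount_le_mul_choose (S := S \ T) fun e _ => edgeMult_le_four (G := G) e
      rwa [h_two] at h_le ⊢
    · exact ih _ (sdiff_ssubset hTS (card_pos.1 (by omega))) h_two
  by_cases h_twelve : ∃ T ⊆ S, #T = 3 ∧ edgeCount G T = 12
  · obtain ⟨T, hTS, hT, hT12⟩ := h_twelve
    exact edgeCount_le_crossingBound_of_triangle_eq_twelve hG hTS hT hT12 hS (h_rest T hTS hT)
  push Not at h_twelve
  have h_max (T : Finset V) (hTS : T ⊆ S) (hT : #T = 3) : edgeCount G T ≤ 11 :=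
    Nat.le_of_lt_succ <|
      (edgeCount_le_twelve_of_card_eq_three hT).lt_of_ne (h_twelve T hTS hT)
  by_cases h_eleven : ∃ T ⊆ S, #T = 3 ∧ edgeCount G T = 11
  · obtain ⟨T, hTS, hT, hT11⟩ := h_eleven
    exact edgeCount_le_crossingBound_of_triangle_eq_eleven hG hTS hT hT11 h_max hS (h_rest T hTS hT)
  push Not at h_eleven
  exact edgeCount_le_crossingBound_of_triangles_le fun T hTS hT =>
    Nat.le_of_lt_succ <| (h_max T hTS hT).lt_of_ne (h_eleven T hTS hT)

end UpperBound

section Construction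

variable {V : Type*}

/-- The extremal `4`-multigraph: `G 0 = G 1` consist of all pairs that meet `A`, and `G 2 = G 3` of
all pairs that meet the complement of `A`. -/
def splitMultigraph (A : Set V) (i : Fin 4) : SimpleGraph V :=
  SimpleGraph.fromRel fun u _ => u ∈ A ↔ i < 2

theorem splitMultigraph_adj {A : Set V} {i : Fin 4} {u v : V} :
    (splitMultigraph A i).Adj u v ↔ u ≠ v ∧ ((u ∈ A ↔ i < 2) ∨ (v ∈ A ↔ i < 2)) :=
  Iff.rfl

theorem splitMultigraph_not_adj_diagonals {A : Set V} {i j k : Fin 4} (hij : i < 2 ↔ j < 2)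
    (hik : ¬ (i < 2 ↔ k < 2)) {w x y z : V}
    (hwx : (splitMultigraph A i).Adj w x) (hyz : (splitMultigraph A i).Adj y z)
    (hwy : (splitMultigraph A j).Adj w y) (hxz : (splitMultigraph A j).Adj x z) :
    ¬ ((splitMultigraph A k).Adj w z ∧ (splitMultigraph A k).Adj x y) := by
  simp only [splitMultigraph_adj, ← hij] at hwx hyz hwy hxz ⊢
  have h_diagonal : ((w ∈ A ↔ i < 2) ∧ (z ∈ A ↔ i < 2)) ∨
      ((x ∈ A ↔ i < 2) ∧ (y ∈ A ↔ i < 2)) := by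
    by_cases hw : w ∈ A ↔ i < 2
    · by_cases hz : z ∈ A ↔ i < 2
      · exact .inl ⟨hw, hz⟩
      · exact .inr ⟨hxz.2.resolve_right hz, hyz.2.resolve_right hz⟩
    · exact .inr ⟨hwx.2.resolve_left hw, hwy.2.resolve_left hw⟩
  have h_disjoint {v : V} (hi : v ∈ A ↔ i < 2) : ¬ (v ∈ A ↔ k < 2) := fun hk =>
    hik (hi.symm.trans hk)
  rintro ⟨⟨-, hwz⟩, ⟨-, hxy⟩⟩
  obtain ⟨hw, hz⟩ | ⟨hx, hy⟩ := h_diagonal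
  · exact hwz.elim (h_disjoint hw) (h_disjoint hz)
  · exact hxy.elim (h_disjoint hx) (h_disjoint hy)

theorem not_hasThreeCrossingPairs_splitMultigraph (A : Set V) :
    ¬ HasThreeCrossingPairs (splitMultigraph A) := by
  rintro ⟨i, j, k, hij, hik, hjk, w, x, y, z, -, -, -, -, -, -, hwx, hyz, hwy, hxz, hwz, hxy⟩
  obtain ⟨h_same, h_ne⟩ | ⟨h_same, h_ne⟩ | ⟨h_same, h_ne⟩ :
      ((i < 2 ↔ j < 2) ∧ ¬ (i < 2 ↔ k < 2)) ∨ ((i < 2 ↔ k < 2) ∧ ¬ (i < 2 ↔ j < 2)) ∨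
        ((j < 2 ↔ k < 2) ∧ ¬ (j < 2 ↔ i < 2)) := by
    omega
  · exact splitMultigraph_not_adj_diagonals h_same h_ne hwx hyz hwy hxz ⟨hwz, hxy⟩
  · exact splitMultigraph_not_adj_diagonals h_same h_ne hwx hyz.symm hwz hxy ⟨hwy, hxz⟩
  · exact splitMultigraph_not_adj_diagonals h_same h_ne hwy hxz.symm hwz hxy.symm ⟨hwx, hyz⟩

theorem mem_edgeColors_splitMultigraph {A : Set V} {i : Fin 4} {u v : V} (huv : u ≠ v) :
    i ∈ edgeColors (splitMultigraph A) s(u, v) ↔ (u ∈ A ↔ i < 2) ∨ (v ∈ A ↔ i < 2) := by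
  rw [mem_edgeColors, SimpleGraph.mem_edgeSet, splitMultigraph_adj, and_iff_right huv]

theorem edgeMult_splitMultigraph_of_mem_iff_mem {A : Set V} {u v : V} (huv : u ≠ v)
    (hA : u ∈ A ↔ v ∈ A) : edgeMult (splitMultigraph A) s(u, v) = 2 := by
  by_cases hv : v ∈ A
  · have h_colors : edgeColors (splitMultigraph A) s(u, v) = {0, 1} := by
      ext i
      simp only [mem_edgeColors_splitMultigraph huv, hA, hv, true_iff, or_self, mem_insert,
        mem_singleton]
      omega
    rw [edgeMult, h_colors]
    rfl
  · have h_colors : edgeColors (splitMultigraph A) s(u, v) = {2, 3} := by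
      ext i
      simp only [mem_edgeColors_splitMultigraph huv, hA, hv, false_iff, not_lt, or_self, mem_insert,
        mem_singleton]
      omega
    rw [edgeMult, h_colors]
    rfl

theorem edgeMult_splitMultigraph_of_mem_of_notMem {A : Set V} {u v : V} (hu : u ∈ A)
    (hv : v ∉ A) : edgeMult (splitMultigraph A) s(u, v) = 4 := by
  have h_colors : edgeColors (splitMultigraph A) s(u, v) = univ := by
    ext i
    simp [mem_edgeColors_splitMultigraph (ne_of_mem_of_not_mem hu hv), hu, hv, lt_or_ge]
  rw [edgeMult, h_colors, card_univ, Fintype.card_fin]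

theorem edgeCount_splitMultigraph [Fintype V] [DecidableEq V] (A : Finset V) :
    edgeCount (splitMultigraph (A : Set V)) univ =
      2 * (#A).choose 2 + 2 * (#Aᶜ).choose 2 + #A * (#Aᶜ * 4) := by
  rw [← union_compl A, edgeCount_union disjoint_compl_right]
  congr 2
  · refine edgeCount_eq_mul_choose <| Sym2.ind fun u v huv h_diag => ?_
    obtain ⟨hu, hv⟩ := mk_mem_sym2_iff.1 huv
    exact edgeMult_splitMultigraph_of_mem_iff_mem h_diag (by simp [hu, hv])
  · refine edgeCount_eq_mul_choose <| Sym2.ind fun u v huv h_diag => ?_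
    obtain ⟨hu, hv⟩ := mk_mem_sym2_iff.1 huv
    rw [mem_compl] at hu hv
    exact edgeMult_splitMultigraph_of_mem_iff_mem h_diag (by simp [hu, hv])
  · refine sum_eq_card_nsmul fun u hu => sum_eq_card_nsmul fun v hv => ?_
    exact edgeMult_splitMultigraph_of_mem_of_notMem hu (by simpa using hv)

end Construction

theorem f4_value_general {V : Type*} [Fintype V] (hV : 4 ≤ Fintype.card V) :
    IsGreatest {m : ℕ | ∃ G : Fin 4 → SimpleGraph V,
        ¬ HasThreeCrossingPairs G ∧ ∑ i, (G i).edgeSet.ncard = m}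
      (2 * (Fintype.card V).choose 2 + 2 * (Fintype.card V ^ 2 / 4)) := by
  classical
  constructor
  · obtain ⟨A, hA⟩ : ∃ A : Finset V, #A = Fintype.card V / 2 :=
      (exists_subset_card_eq (Nat.div_le_self _ _)).imp fun _ h => h.2
    refine ⟨splitMultigraph A, not_hasThreeCrossingPairs_splitMultigraph _, ?_⟩
    rw [← edgeCount_univ, edgeCount_splitMultigraph, card_compl, hA, ← crossingBound_eq,
      crossingBound]
  · rintro m ⟨G, hG, rfl⟩
    rw [← edgeCount_univ]
    exact edgeCount_le_crossingBound hG (S := univ) hV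

/-- Füredi–Simonovits: for `n ≥ 4` the maximum total number of edges of a `4`-multigraph
on `n` vertices without three crossing pairs equals `2·C(n,2) + 2·⌊n²/4⌋`. -/
theorem f4_value (n : ℕ) (hn : 4 ≤ n) :
    IsGreatest {m : ℕ | ∃ G : Fin 4 → SimpleGraph (Fin n),
        ¬ HasThreeCrossingPairs G ∧ ∑ i, (G i).edgeSet.ncard = m}
      (2 * n.choose 2 + 2 * (n ^ 2 / 4)) := by
  simpa using f4_value_general (V := Fin n) (by simpa using hn)
end

section
/- Let (G_1, …, G_5) be a 5-multigraph on four vertices not containing three crossing pairs, with total number of edges e ≥ 23. Then there exists an enumeration {w, x, y, z} of the four vertices such that the multiplicity of the pair wx plus the multiplicity of the pair yz is at most 5. -/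
open Finset

section DistinctRepresentatives

variable {ι α : Type*} [Fintype ι] [DecidableEq ι] [Fintype α]

theorem sum_card_le_of_card_biUnion_lt [DecidableEq α] {t : ι → Finset α} {s : Finset ι}
    (hs : #(s.biUnion t) < #s) :
    ∑ i, #(t i) ≤ #s * (#s - 1) + #sᶜ * Fintype.card α := by
  rw [← sum_add_sum_compl s]
  gcongr
  · refine sum_le_card_nsmul s _ _ fun i hi ↦ ?_
    have := card_le_card (subset_biUnion_of_mem t hi)
    lia
  · exact sum_le_card_nsmul sᶜ _ _ fun i _ ↦ card_le_univ (t i)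

theorem exists_injective_forall_mem_of_lt_sum_card {t : ι → Finset α}
    (hne : ∀ i, (t i).Nonempty)
    (hsum : ∀ s : Finset ι, 2 ≤ #s →
      #s * (#s - 1) + #sᶜ * Fintype.card α < ∑ i, #(t i)) :
    ∃ f : ι → α, f.Injective ∧ ∀ i, f i ∈ t i := by
  classical
  refine (all_card_le_biUnion_card_iff_exists_injective t).mp fun s ↦ ?_
  by_contra! hs
  have hunion : 0 < #(s.biUnion t) := by
    obtain ⟨i, hi⟩ : s.Nonempty := card_pos.mp (by lia)
    exact card_pos.mpr ((hne i).mono (subset_biUnion_of_mem t hi))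
  exact (sum_card_le_of_card_biUnion_lt hs).not_gt (hsum s (by lia))

theorem exists_injective_forall_mem_of_card_add_three_le {t : Fin 3 → Finset α}
    (hne : ∀ i, (t i).Nonempty) (hcard : 4 ≤ Fintype.card α)
    (hsum : Fintype.card α + 3 ≤ ∑ i, #(t i)) :
    ∃ f : Fin 3 → α, f.Injective ∧ ∀ i, f i ∈ t i := by
  refine exists_injective_forall_mem_of_lt_sum_card hne fun s hs ↦ ?_
  have hs' : #s ≤ 3 := card_le_univ s
  rw [card_compl, Fintype.card_fin]
  interval_cases #s <;> lia

end DistinctRepresentatives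

section Multiplicity

variable {ι V : Type*} (G : ι → SimpleGraph V)

/-- The multiplicity `e(x, y)` of the pair `xy` in the multigraph `(G i)`. -/
noncomputable def edgeMultiplicity (x y : V) : ℕ :=
  {i | (G i).Adj x y}.ncard

theorem edgeMultiplicity_comm (x y : V) : edgeMultiplicity G x y = edgeMultiplicity G y x := by
  simp only [edgeMultiplicity, SimpleGraph.adj_comm]

variable [Fintype ι]

open Classical in
/-- The indices of the graphs containing both of the edges `wx` and `yz`; three crossing pairs are
three distinct indices, one for each way of splitting four vertices into two pairs. -/
noncomputable def commonIndices (w x y z : V) : Finset ι :=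
  {i | (G i).Adj w x ∧ (G i).Adj y z}

theorem mem_commonIndices {w x y z : V} {i : ι} :
    i ∈ commonIndices G w x y z ↔ (G i).Adj w x ∧ (G i).Adj y z := by
  simp [commonIndices]

theorem edgeMultiplicity_add_le (w x y z : V) :
    edgeMultiplicity G w x + edgeMultiplicity G y z ≤
      Fintype.card ι + #(commonIndices G w x y z) := by
  have hinter : (commonIndices G w x y z : Set ι) =
      {i | (G i).Adj w x} ∩ {i | (G i).Adj y z} := by
    ext i; simp [mem_commonIndices]
  rw [edgeMultiplicity, edgeMultiplicity, ← Set.ncard_union_add_ncard_inter, ← hinter,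
    Set.ncard_coe_finset, ← Nat.card_eq_fintype_card]
  gcongr
  exact Set.ncard_le_card _

theorem two_mul_sum_ncard_edgeSet [Fintype V] :
    2 * ∑ i, (G i).edgeSet.ncard = ∑ x, ∑ y, edgeMultiplicity G x y := by
  classical
  have handshake (i : ι) :
      2 * (G i).edgeSet.ncard = ∑ x, ∑ y, if (G i).Adj x y then 1 else 0 := by
    rw [Set.ncard_eq_toFinset_card', ← SimpleGraph.edgeFinset,
      ← SimpleGraph.sum_degrees_eq_twice_card_edges]
    simp only [← SimpleGraph.card_neighborFinset_eq_degree, SimpleGraph.neighborFinset_eq_filter,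
      card_filter]
  have hmult (x y : V) : edgeMultiplicity G x y = ∑ i, if (G i).Adj x y then 1 else 0 := by
    rw [edgeMultiplicity, Set.ncard_eq_toFinset_card', Set.toFinset_ofPred, card_filter]
  simp only [mul_sum, handshake, hmult]
  rw [sum_comm]
  exact sum_congr rfl fun x _ ↦ sum_comm

theorem sum_ncard_edgeSet_eq_of_equiv (v : Fin 4 ≃ V) :
    ∑ i, (G i).edgeSet.ncard =
      (edgeMultiplicity G (v 0) (v 1) + edgeMultiplicity G (v 2) (v 3)) +
      (edgeMultiplicity G (v 0) (v 2) + edgeMultiplicity G (v 1) (v 3)) +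
      (edgeMultiplicity G (v 0) (v 3) + edgeMultiplicity G (v 1) (v 2)) := by
  have := Fintype.ofEquiv _ v
  have hself (x : V) : edgeMultiplicity G x x = 0 := by simp [edgeMultiplicity]
  have hsum := two_mul_sum_ncard_edgeSet G
  simp only [← v.sum_comp, Fin.sum_univ_four, hself] at hsum
  linarith [edgeMultiplicity_comm G (v 0) (v 1), edgeMultiplicity_comm G (v 0) (v 2),
    edgeMultiplicity_comm G (v 0) (v 3), edgeMultiplicity_comm G (v 1) (v 2),
    edgeMultiplicity_comm G (v 1) (v 3), edgeMultiplicity_comm G (v 2) (v 3)]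

end Multiplicity

section CrossingPairs

variable {p : ℕ} {V : Type*} {G : Fin p → SimpleGraph V}

theorem hasThreeCrossingPairs_of_injective {v : Fin 4 → V} (hv : v.Injective) {f : Fin 3 → Fin p}
    (hf : f.Injective) (h₁ : f 0 ∈ commonIndices G (v 0) (v 1) (v 2) (v 3))
    (h₂ : f 1 ∈ commonIndices G (v 0) (v 2) (v 1) (v 3))
    (h₃ : f 2 ∈ commonIndices G (v 0) (v 3) (v 1) (v 2)) : HasThreeCrossingPairs G := by
  rw [mem_commonIndices] at h₁ h₂ h₃
  refine ⟨f 0, f 1, f 2, hf.ne ?_, hf.ne ?_, hf.ne ?_, v 0, v 1, v 2, v 3,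
    hv.ne ?_, hv.ne ?_, hv.ne ?_, hv.ne ?_, hv.ne ?_, hv.ne ?_,
    h₁.1, h₁.2, h₂.1, h₂.2, h₃.1, h₃.2⟩ <;> decide

theorem exists_edgeMultiplicity_add_le {v : Fin 4 → V} (hv : v.Injective) (hp : 4 ≤ p)
    (hG : ¬ HasThreeCrossingPairs G)
    (he : 4 * p + 3 ≤
      (edgeMultiplicity G (v 0) (v 1) + edgeMultiplicity G (v 2) (v 3)) +
      (edgeMultiplicity G (v 0) (v 2) + edgeMultiplicity G (v 1) (v 3)) +
      (edgeMultiplicity G (v 0) (v 3) + edgeMultiplicity G (v 1) (v 2))) :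
    ∃ σ : Equiv.Perm (Fin 4),
      edgeMultiplicity G (v (σ 0)) (v (σ 1)) + edgeMultiplicity G (v (σ 2)) (v (σ 3)) ≤ p := by
  by_contra! hlarge
  have hlarge₁ : p < edgeMultiplicity G (v 0) (v 1) + edgeMultiplicity G (v 2) (v 3) := hlarge 1
  have hlarge₂ : p < edgeMultiplicity G (v 0) (v 2) + edgeMultiplicity G (v 1) (v 3) :=
    hlarge (Equiv.swap 1 2)
  have hlarge₃ : p < edgeMultiplicity G (v 0) (v 3) + edgeMultiplicity G (v 1) (v 2) :=
    hlarge c[1, 3, 2]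
  have hle₁ := edgeMultiplicity_add_le G (v 0) (v 1) (v 2) (v 3)
  have hle₂ := edgeMultiplicity_add_le G (v 0) (v 2) (v 1) (v 3)
  have hle₃ := edgeMultiplicity_add_le G (v 0) (v 3) (v 1) (v 2)
  rw [Fintype.card_fin] at hle₁ hle₂ hle₃
  let t := ![commonIndices G (v 0) (v 1) (v 2) (v 3), commonIndices G (v 0) (v 2) (v 1) (v 3),
    commonIndices G (v 0) (v 3) (v 1) (v 2)]
  have hne : ∀ i, (t i).Nonempty := by
    simp only [t, Fin.forall_fin_succ, ← card_pos, Matrix.cons_val_zero, Matrix.cons_val_succ]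
    exact ⟨by lia, by lia, by lia, nofun⟩
  have hsum : Fintype.card (Fin p) + 3 ≤ ∑ i, #(t i) := by
    simp only [t, Fintype.card_fin, Fin.sum_univ_three, Matrix.cons_val]
    lia
  obtain ⟨f, hf, hmem⟩ :=
    exists_injective_forall_mem_of_card_add_three_le hne (by rwa [Fintype.card_fin]) hsum
  exact hG (hasThreeCrossingPairs_of_injective hv hf (hmem 0) (hmem 1) (hmem 2))

theorem five_multigraph_four_vertices_23_general (hV : Nat.card V = 4) (hp : 4 ≤ p)
    (hG : ¬ HasThreeCrossingPairs G) (he : 4 * p + 3 ≤ ∑ i, (G i).edgeSet.ncard) :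
    ∃ w x y z : V, w ≠ x ∧ w ≠ y ∧ w ≠ z ∧ x ≠ y ∧ x ≠ z ∧ y ≠ z ∧
      edgeMultiplicity G w x + edgeMultiplicity G y z ≤ p := by
  have : Finite V := Nat.finite_of_card_ne_zero (by lia)
  let v : Fin 4 ≃ V := (Finite.equivFinOfCardEq hV).symm
  rw [sum_ncard_edgeSet_eq_of_equiv G v] at he
  obtain ⟨σ, hσ⟩ := exists_edgeMultiplicity_add_le v.injective hp hG he
  have hne {a b : Fin 4} (hab : a ≠ b) : v (σ a) ≠ v (σ b) := by simpa
  refine ⟨_, _, _, _, hne ?_, hne ?_, hne ?_, hne ?_, hne ?_, hne ?_, hσ⟩ <;> decide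

end CrossingPairs

/-- In a `5`-multigraph on four vertices without three crossing pairs and with at least
`23` edges in total, some enumeration `w, x, y, z` of the vertices satisfies
`e(w,x) + e(y,z) ≤ 5`. -/
theorem five_multigraph_four_vertices_23 (G : Fin 5 → SimpleGraph (Fin 4))
    (hG : ¬ HasThreeCrossingPairs G) (he : 23 ≤ ∑ i, (G i).edgeSet.ncard) :
    ∃ w x y z : Fin 4, w ≠ x ∧ w ≠ y ∧ w ≠ z ∧ x ≠ y ∧ x ≠ z ∧ y ≠ z ∧
      {i : Fin 5 | (G i).Adj w x}.ncard + {i : Fin 5 | (G i).Adj y z}.ncard ≤ 5 :=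
  five_multigraph_four_vertices_23_general (by simp) (by simp) hG he
end
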